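/- Let f be a non-constant meromorphic function on ℂ with hyper-order ρ₁(f) < 1, let c ∈ ℂ \ {0}, and let k be a positive integer. Then m(r, f^{(k)}(z+c)/f(z)) = S(r,f); that is, the proximity function of the quotient f^{(k)}(z+c)/f(z) is o(T(r,f)) as r→∞ outside a possible exceptional set of finite logarithmic measure. -/

import Mathlib

open MeasureTheory Filter Metric

noncomputable section

namespace Nevanlinna

/-- The positive part of the logarithm. -/
def logp (x : ℝ) : ℝ := max (Real.log x) 0

/-- The Nevanlinna proximity function `m(r, f)`. -/
def prox (f : ℂ → ℂ) (r : ℝ) : ℝ :=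
  (2 * Real.pi)⁻¹ * ∫ θ in (0:ℝ)..(2 * Real.pi),
    logp ‖f (r * Complex.exp (θ * Complex.I))‖

/-- The pole order of `f` at `z`: the smallest `n : ℕ` such that
`(· - z) ^ (n + 1) * f` extends analytically across `z` (with value `0`);
it equals `0` when `f` is analytic at `z`, and junk when no such `n` exists. -/
def poleOrd (f : ℂ → ℂ) (z : ℂ) : ℕ :=
  sInf {n : ℕ | AnalyticAt ℂ (fun w => (w - z) ^ (n + 1) * f w) z}

/-- The unintegrated counting function `n(t, f)` of the poles of `f`,
counted with multiplicity. -/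
def poleCount (f : ℂ → ℂ) (t : ℝ) : ℝ :=
  ∑ᶠ z ∈ closedBall (0:ℂ) t, (poleOrd f z : ℝ)

/-- The integrated counting function `N(r, f)` of the poles of `f`. -/
def N (f : ℂ → ℂ) (r : ℝ) : ℝ :=
  (∫ t in (0:ℝ)..r, (poleCount f t - poleCount f 0) / t) +
    poleCount f 0 * Real.log r

/-- The Nevanlinna characteristic `T(r, f)`. -/
def T (f : ℂ → ℂ) (r : ℝ) : ℝ := prox f r + N f r

/-- A quantity `S : ℝ → ℝ` is `S(r, f)`: it is `o(T(r, f))` as `r → ∞`, outside a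
possible exceptional set of finite linear (Lebesgue) measure. -/
def SmallQty (S : ℝ → ℝ) (f : ℂ → ℂ) : Prop :=
  ∃ E : Set ℝ, volume E < ⊤ ∧
    Tendsto (fun r => S r / T f r) (atTop ⊓ 𝓟 Eᶜ) (nhds 0)

/-- A quantity `S : ℝ → ℝ` is `S(r, f)` with an exceptional set of finite
logarithmic measure. -/
def SmallQtyLog (S : ℝ → ℝ) (f : ℂ → ℂ) : Prop :=
  ∃ E : Set ℝ, E ⊆ Set.Ioi 1 ∧ (∫⁻ t in E, ENNReal.ofReal t⁻¹) < ⊤ ∧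
    Tendsto (fun r => S r / T f r) (atTop ⊓ 𝓟 Eᶜ) (nhds 0)

/-- `a` is a small function of `f`: `T(r, a) = S(r, f)`. -/
def SmallFn (a f : ℂ → ℂ) : Prop := SmallQty (T a) f

/-- The hyper-order `ρ₁(f)` of `f` is `< 1`. -/
def HyperOrderLtOne (f : ℂ → ℂ) : Prop :=
  Filter.limsup
    (fun r => ((Real.log (Real.log (T f r)) / Real.log r : ℝ) : EReal)) atTop < 1

/-- `f` and `g` share the (small) function `a` IM (ignoring multiplicities). -/
def ShareIM (f g a : ℂ → ℂ) : Prop := {z | f z = a z} = {z | g z = a z}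

/-- `f` is non-constant. -/
def Nonconst (f : ℂ → ℂ) : Prop := ¬ ∃ w : ℂ, ∀ z, f z = w

/-- The linear differential polynomial in shift
`𝓛_k(f(z+c)) = ∑_{j=0}^{k} b_j(z) f^{(j)}(z + c)`. -/
def L (k : ℕ) (b : ℕ → ℂ → ℂ) (c : ℂ) (f : ℂ → ℂ) : ℂ → ℂ :=
  fun z => ∑ j ∈ Finset.range (k + 1), b j z * iteratedDeriv j f (z + c)

/-- The unintegrated reduced counting function `n̄(t, a; f)` of the `a`-points of
`f` (ignoring multiplicities). -/
def nbarCount (f a : ℂ → ℂ) (t : ℝ) : ℝ :=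
  ((closedBall (0:ℂ) t) ∩ {z | f z = a z}).ncard

/-- The reduced integrated counting function `N̄(r, a; f)` of the `a`-points of
`f` (ignoring multiplicities). -/
def Nbar (f a : ℂ → ℂ) (r : ℝ) : ℝ :=
  (∫ t in (0:ℝ)..r, (nbarCount f a t - nbarCount f a 0) / t) +
    nbarCount f a 0 * Real.log r

/-- The unintegrated reduced counting function of the `a`-points of `f` of
multiplicity at least `2`. -/
def nbar2Count (f a : ℂ → ℂ) (t : ℝ) : ℝ :=
  ((closedBall (0:ℂ) t) ∩
    {z | f z = a z ∧ deriv (fun w => f w - a w) z = 0}).ncard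

/-- The reduced integrated counting function `N̄_{(2}(r, a; f)` of the `a`-points
of `f` of multiplicity at least `2`. -/
def Nbar2 (f a : ℂ → ℂ) (r : ℝ) : ℝ :=
  (∫ t in (0:ℝ)..r, (nbar2Count f a t - nbar2Count f a 0) / t) +
    nbar2Count f a 0 * Real.log r

/-- The sequence `ψ₁, ψ₂, …` : `psiSeq ψ₁ (i - 1)` is `ψ_i`, defined by the
recurrence `ψ_{i+1} = ψ_i' + ψ₁ ψ_i`. -/
def psiSeq (ψ₁ : ℂ → ℂ) : ℕ → ℂ → ℂ
  | 0 => ψ₁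
  | n + 1 => fun z => deriv (psiSeq ψ₁ n) z + ψ₁ z * psiSeq ψ₁ n z

end Nevanlinna

open Nevanlinna

/-!
Let `R` be slightly larger than `r`. The Poisson–Jensen formula on the disc of radius `R` expresses
`log |f(z + c) / f(z)|` through oscillations of the Poisson kernel, bounded in terms of
`m(R, f) + m(R, 1/f)`, and of the canonical factors of the zeros and poles `a` of `f`, bounded by
powers `|z - a| ^ (-α)` with `α < 1`. The mean of such a power over `|z| = r` is `O(r ^ (-α))`, so
`m(r, f(z + c) / f(z)) ≤ r ^ (-ε) · O(T(R, f))`; derivatives are handled by Cauchy estimates on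
small circles around `z + c` that stay away from the zeros and poles. Since the hyper-order is less
than `1`, a Borel-type growth lemma yields `T(r + r ^ δ, f) ≤ e · T(r, f)` outside a set of finite
logarithmic measure, which closes the estimate.
-/

namespace Nevanlinna

open Complex (canonicalFactor canonicalFactor_apply)
open scoped Real ComplexConjugate Topology

theorem log_one_add_le_rpow_div {x α : ℝ} (hx : 0 ≤ x) (hα₀ : 0 < α) (hα₁ : α ≤ 1) :
    Real.log (1 + x) ≤ x ^ α / α := by
  have hpow : (1 + x) ^ α ≤ 1 + x ^ α := by
    simpa only [Real.one_rpow] using Real.rpow_add_le_add_rpow zero_le_one hx hα₀.le hα₁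
  have hlog : Real.log ((1 + x) ^ α) ≤ (1 + x) ^ α - 1 :=
    Real.log_le_sub_one_of_pos (by positivity)
  rw [Real.log_rpow (by positivity)] at hlog
  rw [le_div_iff₀ hα₀]
  linarith

section LogNorm

variable {E : Type*} [NormedAddCommGroup E] {z w b : E} {d α : ℝ}

theorem log_norm_sub_sub_log_norm_sub_le (hz : z ≠ b) (hw : w ≠ b) (hd : ‖w - z‖ ≤ d)
    (hα₀ : 0 < α) (hα₁ : α ≤ 1) :
    Real.log ‖w - b‖ - Real.log ‖z - b‖ ≤ d ^ α / α * ‖z - b‖ ^ (-α) := by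
  have hzb : 0 < ‖z - b‖ := norm_pos_iff.2 (sub_ne_zero.2 hz)
  have hwb : 0 < ‖w - b‖ := norm_pos_iff.2 (sub_ne_zero.2 hw)
  have hd₀ : 0 ≤ d := (norm_nonneg _).trans hd
  have htri : ‖w - b‖ ≤ ‖w - z‖ + ‖z - b‖ := norm_sub_le_norm_sub_add_norm_sub w z b
  calc Real.log ‖w - b‖ - Real.log ‖z - b‖ = Real.log (‖w - b‖ / ‖z - b‖) :=
        (Real.log_div hwb.ne' hzb.ne').symm
    _ ≤ Real.log (1 + d / ‖z - b‖) := by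
        gcongr
        rw [div_le_iff₀ hzb, add_mul, div_mul_cancel₀ _ hzb.ne']
        linarith
    _ ≤ (d / ‖z - b‖) ^ α / α := log_one_add_le_rpow_div (by positivity) hα₀ hα₁
    _ = d ^ α / α * ‖z - b‖ ^ (-α) := by
        rw [Real.div_rpow hd₀ hzb.le, Real.rpow_neg hzb.le]
        ring

theorem abs_log_norm_sub_sub_log_norm_sub_le (hz : z ≠ b) (hw : w ≠ b) (hd : ‖w - z‖ ≤ d)
    (hα₀ : 0 < α) (hα₁ : α ≤ 1) :
    |Real.log ‖w - b‖ - Real.log ‖z - b‖| ≤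
      d ^ α / α * (‖z - b‖ ^ (-α) + ‖w - b‖ ^ (-α)) := by
  have hd₀ : 0 ≤ d := (norm_nonneg _).trans hd
  have hzw := log_norm_sub_sub_log_norm_sub_le hz hw hd hα₀ hα₁
  have hwz := log_norm_sub_sub_log_norm_sub_le hw hz (norm_sub_rev z w ▸ hd) hα₀ hα₁
  have hz₀ : 0 ≤ d ^ α / α * ‖z - b‖ ^ (-α) := by positivity
  have hw₀ : 0 ≤ d ^ α / α * ‖w - b‖ ^ (-α) := by positivity
  rw [abs_le, mul_add]
  constructor <;> linarith

end LogNorm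

theorem periodic_abs_sin_rpow (p : ℝ) : Function.Periodic (fun θ ↦ |Real.sin θ| ^ p) π :=
  fun θ ↦ by simp only [Real.sin_add_pi, abs_neg]

theorem intervalIntegrable_abs_sin_rpow_neg {α : ℝ} (hα₀ : 0 ≤ α) (hα₁ : α < 1) (a b : ℝ) :
    IntervalIntegrable (fun θ ↦ |Real.sin θ| ^ (-α)) volume a b := by
  have hright : IntervalIntegrable (fun θ ↦ |Real.sin θ| ^ (-α)) volume 0 (π / 2) := by
    have hdom : IntervalIntegrable (fun θ : ℝ ↦ (2 / π) ^ (-α) * θ ^ (-α)) volume 0 (π / 2) :=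
      (intervalIntegral.intervalIntegrable_rpow' (by linarith)).const_mul _
    refine hdom.mono_fun' (Measurable.aestronglyMeasurable (by fun_prop)) ?_
    rw [Set.uIoc_of_le (by positivity)]
    refine (ae_restrict_iff' measurableSet_Ioc).2 (Eventually.of_forall fun θ hθ ↦ ?_)
    have hjordan : 2 / π * θ ≤ Real.sin θ := Real.mul_le_sin hθ.1.le hθ.2
    have hpos : 0 < 2 / π * θ := mul_pos (by positivity) hθ.1
    change ‖|Real.sin θ| ^ (-α)‖ ≤ (2 / π) ^ (-α) * θ ^ (-α)
    rw [Real.norm_of_nonneg (by positivity), ← Real.mul_rpow (by positivity) hθ.1.le,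
      abs_of_pos (hpos.trans_le hjordan)]
    exact Real.rpow_le_rpow_of_nonpos hpos hjordan (by linarith)
  have hleft : IntervalIntegrable (fun θ ↦ |Real.sin θ| ^ (-α)) volume (-(π / 2)) 0 := by
    simpa only [Real.sin_neg, abs_neg, neg_zero] using
      ((IntervalIntegrable.iff_comp_neg).1 hright).symm
  refine (periodic_abs_sin_rpow (-α)).intervalIntegrable Real.pi_ne_zero (t := -(π / 2)) ?_ a b
  convert hleft.trans hright using 1
  ring

theorem countable_sin_sub_eq_zero (φ : ℝ) : {θ : ℝ | Real.sin (θ - φ) = 0}.Countable := by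
  refine (Set.countable_range fun n : ℤ ↦ n * π + φ).mono fun θ hθ ↦ ?_
  obtain ⟨n, hn⟩ := Real.sin_eq_zero_iff.1 hθ
  exact ⟨n, by simp only [hn, sub_add_cancel]⟩

theorem abs_mul_abs_sin_le_norm_circleMap_sub (c b : ℂ) (r θ : ℝ) :
    |r| * |Real.sin (θ - (b - c).arg)| ≤ ‖circleMap c r θ - b‖ := by
  set φ := (b - c).arg
  have hrotate : circleMap c r θ - b = Complex.exp (φ * Complex.I) *
      (r * Complex.exp ((θ - φ : ℝ) * Complex.I) - ‖b - c‖) := by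
    rw [mul_sub, mul_left_comm, ← Complex.exp_add, mul_comm _ (‖b - c‖ : ℂ),
      Complex.norm_mul_exp_arg_mul_I, ← add_mul, Complex.ofReal_sub, add_sub_cancel, circleMap]
    ring
  calc |r| * |Real.sin (θ - φ)|
      = |(r * Complex.exp ((θ - φ : ℝ) * Complex.I) - ‖b - c‖).im| := by
        rw [Complex.sub_im, Complex.im_ofReal_mul, Complex.exp_ofReal_mul_I_im, Complex.ofReal_im,
          sub_zero, abs_mul]
    _ ≤ ‖r * Complex.exp ((θ - φ : ℝ) * Complex.I) - ‖b - c‖‖ := Complex.abs_im_le_norm _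
    _ = ‖circleMap c r θ - b‖ := by
        rw [hrotate, norm_mul, Complex.norm_exp_ofReal_mul_I, one_mul]

theorem ae_norm_circleMap_sub_rpow_neg_le {α r : ℝ} (hα : 0 ≤ α) (hr : r ≠ 0) (c b : ℂ) :
    ∀ᵐ θ : ℝ, ‖circleMap c r θ - b‖ ^ (-α) ≤
      |r| ^ (-α) * |Real.sin (θ - (b - c).arg)| ^ (-α) := by
  filter_upwards [(countable_sin_sub_eq_zero (b - c).arg).ae_notMem volume] with θ hθ
  have hsin : 0 < |Real.sin (θ - (b - c).arg)| := abs_pos.2 hθ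
  rw [← Real.mul_rpow (abs_nonneg r) hsin.le]
  exact Real.rpow_le_rpow_of_nonpos (by positivity)
    (abs_mul_abs_sin_le_norm_circleMap_sub c b r θ) (by linarith)

/-- The mean of `|sin| ^ (-α)` over a period, which bounds the circle averages of the
kernels `‖z - b‖ ^ (-α)` uniformly in `b`. -/
def sinRpowMean (α : ℝ) : ℝ := (2 * π)⁻¹ * ∫ θ in (0 : ℝ)..2 * π, |Real.sin θ| ^ (-α)

theorem sinRpowMean_nonneg (α : ℝ) : 0 ≤ sinRpowMean α :=
  mul_nonneg (by positivity) <|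
    intervalIntegral.integral_nonneg (by positivity) fun _ _ ↦ by positivity

section CircleKernel

variable {α r : ℝ} (hα₀ : 0 ≤ α) (hα₁ : α < 1)
include hα₀ hα₁

theorem intervalIntegrable_abs_sin_sub_rpow_neg (φ a b : ℝ) :
    IntervalIntegrable (fun θ ↦ |Real.sin (θ - φ)| ^ (-α)) volume a b := by
  simpa only [sub_add_cancel] using
    (intervalIntegrable_abs_sin_rpow_neg hα₀ hα₁ (a - φ) (b - φ)).comp_sub_right φ

theorem circleIntegrable_norm_sub_rpow_neg (hr : r ≠ 0) (c b : ℂ) :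
    CircleIntegrable (fun z ↦ ‖z - b‖ ^ (-α)) c r := by
  have hmeas : Measurable fun θ ↦ ‖circleMap c r θ - b‖ ^ (-α) := by
    have := (continuous_circleMap c r).measurable
    fun_prop
  have hdom := (intervalIntegrable_abs_sin_sub_rpow_neg hα₀ hα₁ (b - c).arg 0 (2 * π)).const_mul
    (|r| ^ (-α))
  refine hdom.mono_fun' hmeas.aestronglyMeasurable (ae_restrict_of_ae ?_)
  filter_upwards [ae_norm_circleMap_sub_rpow_neg_le hα₀ hr c b] with θ hθ
  rwa [Real.norm_of_nonneg (by positivity)]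

theorem circleAverage_norm_sub_rpow_neg_le (hr : r ≠ 0) (c b : ℂ) :
    Real.circleAverage (fun z ↦ ‖z - b‖ ^ (-α)) c r ≤ sinRpowMean α * |r| ^ (-α) := by
  set φ := (b - c).arg
  have hshift : ∫ θ in (0 : ℝ)..2 * π, |Real.sin (θ - φ)| ^ (-α) =
      ∫ θ in (0 : ℝ)..2 * π, |Real.sin θ| ^ (-α) := by
    have hper : Function.Periodic (fun θ ↦ |Real.sin θ| ^ (-α)) (2 * π) :=
      (periodic_abs_sin_rpow (-α)).nat_mul 2
    rw [intervalIntegral.integral_comp_sub_right fun θ ↦ |Real.sin θ| ^ (-α)]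
    convert hper.intervalIntegral_add_eq (0 - φ) 0 using 2 <;> ring
  rw [Real.circleAverage_def, smul_eq_mul, sinRpowMean, mul_assoc]
  refine mul_le_mul_of_nonneg_left ?_ (by positivity)
  calc ∫ θ in (0 : ℝ)..2 * π, ‖circleMap c r θ - b‖ ^ (-α)
      ≤ ∫ θ in (0 : ℝ)..2 * π, |r| ^ (-α) * |Real.sin (θ - φ)| ^ (-α) :=
        intervalIntegral.integral_mono_ae (by positivity)
          (circleIntegrable_norm_sub_rpow_neg hα₀ hα₁ hr c b)
          ((intervalIntegrable_abs_sin_sub_rpow_neg hα₀ hα₁ φ _ _).const_mul _)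
          (ae_norm_circleMap_sub_rpow_neg_le hα₀ hr c b)
    _ = (∫ θ in (0 : ℝ)..2 * π, |Real.sin θ| ^ (-α)) * |r| ^ (-α) := by
        rw [intervalIntegral.integral_const_mul, hshift, mul_comm]

end CircleKernel

/-- Sets of finite logarithmic measure, i.e. those admissible as exceptional sets in
`SmallQtyLog`; as there, they are taken inside `(1, ∞)`. -/
def HasFiniteLogMeasure (E : Set ℝ) : Prop :=
  E ⊆ Set.Ioi 1 ∧ ∫⁻ t in E, ENNReal.ofReal t⁻¹ < ⊤

theorem setLIntegral_ofReal_inv_le {a : ℝ} (ha : 0 < a) {E : Set ℝ} (hE : E ⊆ Set.Ici a) :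
    ∫⁻ t in E, ENNReal.ofReal t⁻¹ ≤ ENNReal.ofReal a⁻¹ * volume E := by
  rw [← setLIntegral_const]
  exact setLIntegral_mono measurable_const fun t ht ↦
    ENNReal.ofReal_le_ofReal (inv_anti₀ ha (hE ht))

/-- The points of `[a, 2a)` at which `g` grows by more than `1` over a step of length `(2a) ^ δ`,
the largest of the steps `r ^ δ` with `r` in that block. -/
def jumpSet (g : ℝ → ℝ) (δ a : ℝ) : Set ℝ :=
  {r ∈ Set.Ico a (2 * a) | g r + 1 < g (r + (2 * a) ^ δ)}

section Growth

variable {g : ℝ → ℝ} (hg : Monotone g) (hg₀ : ∀ x, 0 ≤ g x)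
include hg hg₀

theorem integral_sub_comp_add_right_le (A B : ℝ) {s : ℝ} (hs : 0 ≤ s) :
    ∫ r in A..B, (g (r + s) - g r) ≤ s * g (B + s) := by
  have hint (a b : ℝ) : IntervalIntegrable g volume a b := hg.intervalIntegrable
  have hshift : IntervalIntegrable (fun r ↦ g (r + s)) volume A B :=
    (hg.comp fun _ _ h ↦ by linarith : Monotone fun r ↦ g (r + s)).intervalIntegrable
  rw [intervalIntegral.integral_sub hshift (hint _ _), intervalIntegral.integral_comp_add_right]
  have hleft := intervalIntegral.integral_add_adjacent_intervals (hint A (A + s))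
    (hint (A + s) (B + s))
  have hright := intervalIntegral.integral_add_adjacent_intervals (hint A B) (hint B (B + s))
  have hfirst : 0 ≤ ∫ r in A..(A + s), g r :=
    intervalIntegral.integral_nonneg (by linarith) fun x _ ↦ hg₀ x
  have hlast : ∫ r in B..(B + s), g r ≤ ∫ _ in B..(B + s), g (B + s) :=
    intervalIntegral.integral_mono_on (by linarith) (hint _ _) (by simp) fun x hx ↦ hg hx.2
  rw [intervalIntegral.integral_const, smul_eq_mul, add_sub_cancel_left] at hlast
  linarith

theorem volume_setOf_add_one_lt_le {A B s : ℝ} (hAB : A ≤ B) (hs : 0 ≤ s) :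
    volume {r ∈ Set.Ico A B | g r + 1 < g (r + s)} ≤ ENNReal.ofReal (s * g (B + s)) := by
  have hshift : Monotone fun r ↦ g (r + s) := hg.comp fun _ _ h ↦ by linarith
  have hmeas : Measurable fun r ↦ ENNReal.ofReal (g (r + s) - g r) :=
    (hshift.measurable.sub hg.measurable).ennreal_ofReal
  calc volume {r ∈ Set.Ico A B | g r + 1 < g (r + s)}
      = volume.restrict (Set.Ico A B) {r | g r + 1 < g (r + s)} := by
        rw [Measure.restrict_apply
          (measurableSet_lt (hg.measurable.add_const _) hshift.measurable), Set.inter_comm]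
        rfl
    _ ≤ volume.restrict (Set.Ico A B) {r | 1 ≤ ENNReal.ofReal (g (r + s) - g r)} :=
        measure_mono fun r (hr : g r + 1 < g (r + s)) ↦
          ENNReal.one_le_ofReal.2 (by linarith)
    _ ≤ ∫⁻ r in Set.Ico A B, ENNReal.ofReal (g (r + s) - g r) := by
        simpa only [one_mul] using
          mul_meas_ge_le_lintegral (μ := volume.restrict (Set.Ico A B)) hmeas 1
    _ = ENNReal.ofReal (∫ r in A..B, (g (r + s) - g r)) := by
        rw [intervalIntegral.integral_of_le hAB, ← integral_Ico_eq_integral_Ioc,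
          ofReal_integral_eq_lintegral_ofReal]
        · exact (intervalIntegrable_iff_integrableOn_Ico_of_le hAB).1
            (hshift.intervalIntegrable.sub hg.intervalIntegrable)
        · exact Eventually.of_forall fun r ↦ sub_nonneg.2 (hg (by linarith))
    _ ≤ ENNReal.ofReal (s * g (B + s)) :=
        ENNReal.ofReal_le_ofReal (integral_sub_comp_add_right_le hg hg₀ A B hs)

theorem setLIntegral_jumpSet_le {a δ σ : ℝ} (ha : 1 ≤ a) (hδ : δ ≤ 1)
    (hgrowth : g (4 * a) ≤ (4 * a) ^ σ) :
    ∫⁻ t in jumpSet g δ a, ENNReal.ofReal t⁻¹ ≤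
      ENNReal.ofReal (2 ^ δ * 4 ^ σ * a ^ (δ + σ - 1)) := by
  have ha₀ : 0 < a := by linarith
  have hstep : (2 * a) ^ δ ≤ 2 * a := by
    simpa only [Real.rpow_one] using
      Real.rpow_le_rpow_of_exponent_le (by linarith : 1 ≤ 2 * a) hδ
  have hend : g (2 * a + (2 * a) ^ δ) ≤ (4 * a) ^ σ := (hg (by linarith)).trans hgrowth
  calc ∫⁻ t in jumpSet g δ a, ENNReal.ofReal t⁻¹
      ≤ ENNReal.ofReal a⁻¹ * volume (jumpSet g δ a) :=
        setLIntegral_ofReal_inv_le ha₀ fun r hr ↦ hr.1.1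
    _ ≤ ENNReal.ofReal a⁻¹ * ENNReal.ofReal ((2 * a) ^ δ * (4 * a) ^ σ) := by
        gcongr
        exact (volume_setOf_add_one_lt_le hg hg₀ (by linarith) (by positivity)).trans
          (ENNReal.ofReal_le_ofReal (by gcongr))
    _ = ENNReal.ofReal (2 ^ δ * 4 ^ σ * a ^ (δ + σ - 1)) := by
        rw [← ENNReal.ofReal_mul (by positivity), Real.mul_rpow zero_le_two ha₀.le,
          Real.mul_rpow zero_le_four ha₀.le, Real.rpow_sub_one ha₀.ne', Real.rpow_add ha₀]
        congr 1
        ring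

theorem exists_hasFiniteLogMeasure_le_add_one {σ δ : ℝ} (hσ : 0 ≤ σ) (hδ : 0 ≤ δ)
    (hσδ : σ + δ < 1) (hgrowth : ∀ᶠ r in atTop, g r ≤ r ^ σ) :
    ∃ E, HasFiniteLogMeasure E ∧ ∀ᶠ r in atTop ⊓ 𝓟 Eᶜ, g (r + r ^ δ) ≤ g r + 1 := by
  obtain ⟨a, ha₁, ha⟩ : ∃ a > 1, ∀ r ≥ a, g r ≤ r ^ σ :=
    ((eventually_gt_atTop 1).and (eventually_forall_ge_atTop.2 hgrowth)).exists
  have ha₀ : 0 < a := by linarith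
  have hblock (n : ℕ) : a ≤ a * 2 ^ n := le_mul_of_one_le_right ha₀.le (one_le_pow₀ one_le_two)
  refine ⟨⋃ n : ℕ, jumpSet g δ (a * 2 ^ n), ⟨?_, ?_⟩, ?_⟩
  · exact Set.iUnion_subset fun n r hr ↦ ha₁.trans_le ((hblock n).trans hr.1.1)
  · calc ∫⁻ t in ⋃ n : ℕ, jumpSet g δ (a * 2 ^ n), ENNReal.ofReal t⁻¹
        ≤ ∑' n : ℕ, ∫⁻ t in jumpSet g δ (a * 2 ^ n), ENNReal.ofReal t⁻¹ := lintegral_iUnion_le _ _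
      _ ≤ ∑' n : ℕ, ENNReal.ofReal
            (2 ^ δ * 4 ^ σ * a ^ (δ + σ - 1) * (2 ^ (δ + σ - 1)) ^ n) := by
          refine ENNReal.tsum_le_tsum fun n ↦ (setLIntegral_jumpSet_le hg hg₀
            (ha₁.le.trans (hblock n)) (by linarith)
            (ha _ (by linarith [hblock n]))).trans_eq ?_
          rw [Real.mul_rpow ha₀.le (by positivity), ← Real.rpow_pow_comm zero_le_two]
          congr 1
          ring
      _ < ⊤ := Summable.tsum_ofReal_lt_top <| (summable_geometric_of_lt_one (by positivity)
          (Real.rpow_lt_one_of_one_lt_of_neg one_lt_two (by linarith))).mul_left _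
  · rw [eventually_inf_principal]
    filter_upwards [eventually_ge_atTop a] with r hr hrE
    by_contra! hjump
    obtain ⟨n, hn, hn'⟩ := exists_nat_pow_near ((one_le_div ha₀).2 hr) one_lt_two
    rw [le_div_iff₀' ha₀] at hn
    rw [div_lt_iff₀' ha₀, pow_succ', mul_left_comm] at hn'
    have hr₀ : 0 ≤ r := by linarith
    refine hrE (Set.mem_iUnion.2 ⟨n, ⟨hn, hn'⟩, hjump.trans_le (hg ?_)⟩)
    gcongr

end Growth

theorem exists_hasFiniteLogMeasure_le_exp_one_mul {F : ℝ → ℝ} (hF : MonotoneOn F (Set.Ioi 0))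
    (hF_top : Tendsto F atTop atTop) {σ δ : ℝ} (hσ : 0 ≤ σ) (hδ : 0 ≤ δ) (hσδ : σ + δ < 1)
    (hgrowth : ∀ᶠ r in atTop, Real.log (F r) ≤ r ^ σ) :
    ∃ E, HasFiniteLogMeasure E ∧
      ∀ᶠ r in atTop ⊓ 𝓟 Eᶜ, F (r + r ^ δ) ≤ Real.exp 1 * F r := by
  -- `log F`, truncated so as to be monotone and nonnegative on all of `ℝ`
  set g : ℝ → ℝ := fun x ↦ Real.log (max 1 (F (max x 1)))
  have hg : Monotone g := fun x y hxy ↦ Real.log_le_log (by positivity) <|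
    max_le_max le_rfl <| hF (Set.mem_Ioi.2 (by positivity)) (Set.mem_Ioi.2 (by positivity))
      (max_le_max hxy le_rfl)
  have hg_eq : ∀ᶠ x in atTop, g x = Real.log (F x) := by
    filter_upwards [eventually_ge_atTop 1, hF_top.eventually_ge_atTop 1] with x hx hFx
    simp only [g, max_eq_left hx, max_eq_right hFx]
  obtain ⟨E, hE, hstep⟩ := exists_hasFiniteLogMeasure_le_add_one hg
    (fun x ↦ Real.log_nonneg (le_max_left _ _)) hσ hδ hσδ
    (by filter_upwards [hg_eq, hgrowth] with x hx hle using hx.trans_le hle)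
  refine ⟨E, hE, ?_⟩
  obtain ⟨R, hR⟩ := eventually_atTop.1 (hg_eq.and (hF_top.eventually_ge_atTop 1))
  filter_upwards [hstep, mem_inf_of_left (eventually_ge_atTop (max R 0))] with r hr hrR
  have hr₀ : 0 ≤ r := (le_max_right _ _).trans hrR
  have hr' : r ≤ r + r ^ δ := le_add_of_nonneg_right (by positivity)
  obtain ⟨hgr, hFr⟩ := hR r ((le_max_left _ _).trans hrR)
  obtain ⟨hgr', hFr'⟩ := hR (r + r ^ δ) (((le_max_left _ _).trans hrR).trans hr')
  rw [hgr, hgr'] at hr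
  calc F (r + r ^ δ) = Real.exp (Real.log (F (r + r ^ δ))) := (Real.exp_log (by linarith)).symm
    _ ≤ Real.exp (Real.log (F r) + 1) := Real.exp_le_exp.2 hr
    _ = Real.exp 1 * F r := by rw [Real.exp_add, Real.exp_log (by linarith), mul_comm]

/-- The Poisson integral at `z` of a function `g` on the circle of radius `R` about the origin. -/
def poissonIntegral (g : ℂ → ℝ) (R : ℝ) (z : ℂ) : ℝ :=
  Real.circleAverage (fun ζ ↦ poissonKernel 0 z ζ * g ζ) 0 R

section Poisson

variable {g : ℂ → ℝ} {R : ℝ}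

theorem poissonKernel_zero_left {ζ : ℂ} (hζ : ζ ≠ 0) : poissonKernel 0 0 ζ = 1 := by
  have hne : ‖ζ‖ ^ 2 ≠ 0 := by positivity
  simp only [poissonKernel_def, sub_zero, norm_zero, ne_eq, OfNat.ofNat_ne_zero, not_false_eq_true,
    zero_pow, div_self hne]

theorem abs_poissonKernel_sub_le {z w ζ : ℂ} {d : ℝ} (hz : ‖z‖ < ‖ζ‖) (hwz : ‖w - z‖ ≤ d)
    (hd : 2 * d ≤ ‖ζ‖ - ‖z‖) :
    |poissonKernel 0 w ζ - poissonKernel 0 z ζ| ≤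
      4 * d / (‖ζ‖ - ‖z‖) * poissonKernel 0 z ζ := by
  have hd₀ : 0 ≤ d := (norm_nonneg _).trans hwz
  have hgap : ‖ζ‖ - ‖z‖ ≤ ‖ζ - z‖ := norm_sub_norm_le _ _
  have hhalf : ‖ζ - z‖ / 2 ≤ ‖ζ - w‖ := by
    have := norm_sub_le_norm_sub_add_norm_sub ζ w z
    linarith
  have hζz : 0 < ‖ζ - z‖ := by linarith
  have hζw : 0 < ‖ζ - w‖ := by linarith
  have hgap₀ : 0 < ‖ζ‖ - ‖z‖ := sub_pos.2 hz
  have hkernel : herglotzRieszKernel 0 w ζ - herglotzRieszKernel 0 z ζ =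
      2 * ζ * (w - z) / ((ζ - w) * (ζ - z)) := by
    have hz' : ζ - z ≠ 0 := norm_pos_iff.1 hζz
    have hw' : ζ - w ≠ 0 := norm_pos_iff.1 hζw
    simp only [herglotzRieszKernel_def, sub_zero]
    field_simp
    ring
  calc |poissonKernel 0 w ζ - poissonKernel 0 z ζ|
      = |(herglotzRieszKernel 0 w ζ - herglotzRieszKernel 0 z ζ).re| := by
        simp only [poissonKernel_eq_re_herglotzRieszKernel, Function.comp_apply, Complex.sub_re]
    _ ≤ ‖herglotzRieszKernel 0 w ζ - herglotzRieszKernel 0 z ζ‖ := Complex.abs_re_le_norm _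
    _ = 2 * ‖ζ‖ * ‖w - z‖ / (‖ζ - w‖ * ‖ζ - z‖) := by
        rw [hkernel, norm_div, norm_mul, norm_mul, norm_mul, Complex.norm_two]
    _ ≤ 2 * ‖ζ‖ * d / (‖ζ - z‖ / 2 * ‖ζ - z‖) := by gcongr
    _ = 4 * d / (‖ζ‖ - ‖z‖) * (‖ζ‖ * (‖ζ‖ - ‖z‖) / ‖ζ - z‖ ^ 2) := by
        field_simp
        ring
    _ ≤ 4 * d / (‖ζ‖ - ‖z‖) * poissonKernel 0 z ζ := by
        simp only [poissonKernel_def, sub_zero]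
        gcongr
        nlinarith [norm_nonneg z]

theorem continuousOn_poissonKernel_sphere {z : ℂ} (hz : z ∈ ball 0 R) :
    ContinuousOn (poissonKernel 0 z) (sphere 0 |R|) := by
  rw [poissonKernel_eq_re_herglotzRieszKernel]
  exact Complex.continuous_re.comp_continuousOn (continuousOn_herglotzRieszKernel_sphere hz)

theorem circleIntegrable_poissonKernel_mul (hg : CircleIntegrable g 0 R) {z : ℂ}
    (hz : z ∈ ball 0 R) : CircleIntegrable (fun ζ ↦ poissonKernel 0 z ζ * g ζ) 0 R :=
  hg.continuousOn_smul (continuousOn_poissonKernel_sphere hz)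

theorem abs_poissonIntegral_sub_le {z w : ℂ} {d : ℝ} (hg : CircleIntegrable g 0 R)
    (hz : z ∈ ball 0 R) (hw : w ∈ ball 0 R) (hwz : ‖w - z‖ ≤ d) (hd : 2 * d ≤ R - ‖z‖) :
    |poissonIntegral g R w - poissonIntegral g R z| ≤
      4 * d / (R - ‖z‖) * poissonIntegral (fun ζ ↦ |g ζ|) R z := by
  have hR : 0 < R := pos_of_mem_ball hz
  have hw_int := circleIntegrable_poissonKernel_mul hg hw
  have hz_int := circleIntegrable_poissonKernel_mul hg hz
  calc |poissonIntegral g R w - poissonIntegral g R z|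
      = |Real.circleAverage ((fun ζ ↦ poissonKernel 0 w ζ * g ζ) -
          fun ζ ↦ poissonKernel 0 z ζ * g ζ) 0 R| := by
        rw [Real.circleAverage_sub hw_int hz_int, poissonIntegral, poissonIntegral]
    _ ≤ Real.circleAverage |(fun ζ ↦ poissonKernel 0 w ζ * g ζ) -
          fun ζ ↦ poissonKernel 0 z ζ * g ζ| 0 R := Real.abs_circleAverage_le_circleAverage_abs
    _ ≤ Real.circleAverage
          (fun ζ ↦ (4 * d / (R - ‖z‖)) • (poissonKernel 0 z ζ * |g ζ|)) 0 R := by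
        refine Real.circleAverage_mono (hw_int.sub hz_int).abs
          ((circleIntegrable_poissonKernel_mul hg.abs hz).const_smul) fun ζ hζ ↦ ?_
        rw [abs_of_pos hR, mem_sphere_zero_iff_norm] at hζ
        simp only [Pi.abs_apply, Pi.sub_apply, ← sub_mul, abs_mul, smul_eq_mul, ← mul_assoc]
        rw [mem_ball_zero_iff] at hz
        gcongr
        rw [← hζ] at hz hd ⊢
        exact abs_poissonKernel_sub_le hz hwz hd
    _ = 4 * d / (R - ‖z‖) * poissonIntegral (fun ζ ↦ |g ζ|) R z := by
        rw [Real.circleAverage_fun_smul, smul_eq_mul, poissonIntegral]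

theorem harmonicOnNhd_poissonIntegral (hg : CircleIntegrable g 0 R) :
    InnerProductSpace.HarmonicOnNhd (poissonIntegral g R) (ball 0 R) := by
  have hg_complex : CircleIntegrable (fun ζ ↦ (g ζ : ℂ)) 0 R := by
    simp only [CircleIntegrable, intervalIntegrable_iff] at hg ⊢
    exact Complex.ofRealCLM.integrable_comp hg
  intro z hz
  have hharm := (analyticOnNhd_circleAverage_herglotzRieszKernel_smul hg_complex z hz).harmonicAt_re
  refine (InnerProductSpace.harmonicAt_congr_nhds ?_).1 hharm
  filter_upwards [isOpen_ball.mem_nhds hz] with w hw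
  rw [re_circleAverage_herglotzRieszKernel_smul hg hw, ← poissonKernel_eq_re_herglotzRieszKernel]
  rfl

section Mean

variable {r : ℝ} (hg : CircleIntegrable g 0 R) (hr : |r| < R)
include hg hr

theorem circleAverage_poissonIntegral :
    Real.circleAverage (poissonIntegral g R) 0 r = Real.circleAverage g 0 R := by
  have hR : 0 < R := (abs_nonneg r).trans_lt hr
  rw [((harmonicOnNhd_poissonIntegral hg).mono (closedBall_subset_ball hr)).circleAverage_eq,
    poissonIntegral]
  refine Real.circleAverage_congr_sphere fun ζ hζ ↦ ?_
  rw [abs_of_pos hR] at hζ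
  simp only [poissonKernel_zero_left (ne_of_mem_sphere hζ hR.ne'), one_mul]

theorem circleIntegrable_poissonIntegral : CircleIntegrable (poissonIntegral g R) 0 r :=
  ((harmonicOnNhd_poissonIntegral hg).mono
    (sphere_subset_closedBall.trans (closedBall_subset_ball hr))).continuousOn.circleIntegrable'

end Mean

end Poisson

theorem norm_sub_rpow_neg_le_two_mul {E : Type*} [NormedAddCommGroup E] {w x e : E} {α : ℝ}
    (hα₀ : 0 ≤ α) (hα₁ : α ≤ 1) (hwx : ‖w - x‖ ≤ ‖x - e‖ / 2) :
    ‖w - e‖ ^ (-α) ≤ 2 * ‖x - e‖ ^ (-α) := by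
  rcases eq_or_ne x e with rfl | hxe
  · obtain rfl : w = x := by simpa [sub_eq_zero] using hwx
    linarith [Real.rpow_nonneg (norm_nonneg (w - w)) (-α)]
  have hxe₀ : 0 < ‖x - e‖ := norm_pos_iff.2 (sub_ne_zero.2 hxe)
  have hhalf : ‖x - e‖ / 2 ≤ ‖w - e‖ := by
    have := norm_sub_le_norm_sub_add_norm_sub x w e
    rw [norm_sub_rev x w] at this
    linarith
  calc ‖w - e‖ ^ (-α) ≤ (‖x - e‖ / 2) ^ (-α) :=
        Real.rpow_le_rpow_of_nonpos (by positivity) hhalf (by linarith)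
    _ = 2 ^ α * ‖x - e‖ ^ (-α) := by
        rw [Real.div_rpow hxe₀.le zero_le_two, Real.rpow_neg zero_le_two, div_inv_eq_mul, mul_comm]
    _ ≤ 2 * ‖x - e‖ ^ (-α) := by
        gcongr
        simpa only [Real.rpow_one] using Real.rpow_le_rpow_of_exponent_le one_le_two hα₁

theorem lt_norm_sq_div_conj {R : ℝ} {a : ℂ} (ha₀ : a ≠ 0) (ha : ‖a‖ < R) :
    R < ‖(R : ℂ) ^ 2 / conj a‖ := by
  have hR : 0 < R := (norm_nonneg a).trans_lt ha
  rw [norm_div, norm_pow, Complex.norm_real, Real.norm_of_nonneg hR.le, RCLike.norm_conj,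
    lt_div_iff₀ (norm_pos_iff.2 ha₀), sq]
  gcongr

/-- The kernel `‖z - a‖ ^ (-α) + ‖z - a*‖ ^ (-α)`, where `a* = R ^ 2 / conj a` is the reflection of
`a` in the circle of radius `R`. For `a = 0` the reflected point is `0` as well, which is harmless
since only upper bounds in terms of this kernel are needed. -/
def pairPotential (α R : ℝ) (a z : ℂ) : ℝ :=
  ‖z - a‖ ^ (-α) + ‖z - R ^ 2 / conj a‖ ^ (-α)

section CanonicalFactor

variable {α R d : ℝ} {a z w : ℂ}

theorem norm_sub_rpow_neg_le_pairPotential (α R : ℝ) (a z : ℂ) :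
    ‖z - a‖ ^ (-α) ≤ pairPotential α R a z :=
  le_add_of_nonneg_right (by positivity)

theorem pairPotential_nonneg (α R : ℝ) (a z : ℂ) : 0 ≤ pairPotential α R a z :=
  (by positivity : (0 : ℝ) ≤ _).trans (norm_sub_rpow_neg_le_pairPotential α R a z)

theorem pairPotential_le_two_mul (hα₀ : 0 ≤ α) (hα₁ : α ≤ 1) (ha : ‖a‖ < R)
    (hza : ‖w - z‖ ≤ ‖z - a‖ / 2) (hzR : ‖w - z‖ ≤ (R - ‖z‖) / 2) :
    pairPotential α R a w ≤ 2 * pairPotential α R a z := by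
  have hreflection : ‖w - z‖ ≤ ‖z - R ^ 2 / conj a‖ / 2 := by
    rcases eq_or_ne a 0 with rfl | ha₀
    · simpa only [map_zero, div_zero] using hza
    · have := lt_norm_sq_div_conj ha₀ ha
      have := norm_sub_norm_le ((R : ℂ) ^ 2 / conj a) z
      rw [norm_sub_rev] at this
      linarith
  rw [pairPotential, pairPotential, mul_add]
  exact add_le_add (norm_sub_rpow_neg_le_two_mul hα₀ hα₁ hza)
    (norm_sub_rpow_neg_le_two_mul hα₀ hα₁ hreflection)

theorem log_norm_canonicalFactor_zero (hR : R ≠ 0) (hz : z ≠ 0) :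
    Real.log ‖canonicalFactor R 0 z‖ = Real.log R - Real.log ‖z‖ := by
  rw [canonicalFactor_apply, map_zero, zero_mul, sub_zero, sub_zero, sq,
    mul_div_mul_left _ _ (Complex.ofReal_ne_zero.2 hR), norm_div, Complex.norm_real,
    Real.norm_eq_abs, Real.log_div (abs_ne_zero.2 hR) (norm_ne_zero_iff.2 hz), Real.log_abs]

theorem log_norm_canonicalFactor (hR : R ≠ 0) (ha₀ : a ≠ 0) (hza : z ≠ a)
    (hz : z ≠ R ^ 2 / conj a) :
    Real.log ‖canonicalFactor R a z‖ =
      Real.log ‖a‖ - Real.log R + Real.log ‖z - R ^ 2 / conj a‖ - Real.log ‖z - a‖ := by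
  have hR' : (R : ℂ) ≠ 0 := Complex.ofReal_ne_zero.2 hR
  have hconj : conj a ≠ 0 := (map_ne_zero _).2 ha₀
  have hfactor : canonicalFactor R a z =
      -(conj a / R * (z - R ^ 2 / conj a) / (z - a)) := by
    have hza' : z - a ≠ 0 := sub_ne_zero.2 hza
    rw [canonicalFactor_apply]
    field_simp
    ring
  rw [hfactor, norm_neg, norm_div, norm_mul, norm_div, RCLike.norm_conj, Complex.norm_real,
    Real.norm_eq_abs,
    Real.log_div (by simp [hR, ha₀, sub_ne_zero.2 hz]) (by simp [sub_ne_zero.2 hza]),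
    Real.log_mul (by simp [hR, ha₀]) (by simp [sub_ne_zero.2 hz]),
    Real.log_div (by simp [ha₀]) (by simp [hR]), Real.log_abs]

theorem abs_log_norm_canonicalFactor_sub_le (hza : z ≠ a) (hwa : w ≠ a) (hz : ‖z‖ < R)
    (hw : ‖w‖ < R) (ha : ‖a‖ < R) (hwz : ‖w - z‖ ≤ d) (hα₀ : 0 < α) (hα₁ : α ≤ 1) :
    |Real.log ‖canonicalFactor R a w‖ - Real.log ‖canonicalFactor R a z‖| ≤
      d ^ α / α * (pairPotential α R a z + pairPotential α R a w) := by
  have hR : R ≠ 0 := ((norm_nonneg _).trans_lt hz).ne'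
  have hd₀ : 0 ≤ d := (norm_nonneg _).trans hwz
  have hdiff_a := abs_log_norm_sub_sub_log_norm_sub_le hza hwa hwz hα₀ hα₁
  rcases eq_or_ne a 0 with rfl | ha₀
  · rw [log_norm_canonicalFactor_zero hR hwa, log_norm_canonicalFactor_zero hR hza,
      sub_sub_sub_cancel_left, abs_sub_comm]
    rw [sub_zero, sub_zero] at hdiff_a
    refine hdiff_a.trans ?_
    gcongr <;> simpa only [sub_zero] using norm_sub_rpow_neg_le_pairPotential α R 0 _
  · set b : ℂ := R ^ 2 / conj a
    have hb : R < ‖b‖ := lt_norm_sq_div_conj ha₀ ha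
    have hzb : z ≠ b := ne_of_apply_ne norm (hz.trans hb).ne
    have hwb : w ≠ b := ne_of_apply_ne norm (hw.trans hb).ne
    have hdiff_b := abs_log_norm_sub_sub_log_norm_sub_le hzb hwb hwz hα₀ hα₁
    rw [log_norm_canonicalFactor hR ha₀ hwa hwb, log_norm_canonicalFactor hR ha₀ hza hzb]
    calc |Real.log ‖a‖ - Real.log R + Real.log ‖w - b‖ - Real.log ‖w - a‖ -
          (Real.log ‖a‖ - Real.log R + Real.log ‖z - b‖ - Real.log ‖z - a‖)|
        = |Real.log ‖w - b‖ - Real.log ‖z - b‖ - (Real.log ‖w - a‖ - Real.log ‖z - a‖)| := by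
          congr 1
          ring
      _ ≤ |Real.log ‖w - b‖ - Real.log ‖z - b‖| + |Real.log ‖w - a‖ - Real.log ‖z - a‖| :=
          abs_sub _ _
      _ ≤ d ^ α / α * (‖z - b‖ ^ (-α) + ‖w - b‖ ^ (-α)) +
            d ^ α / α * (‖z - a‖ ^ (-α) + ‖w - a‖ ^ (-α)) := add_le_add hdiff_b hdiff_a
      _ = d ^ α / α * (pairPotential α R a z + pairPotential α R a w) := by
          simp only [pairPotential, b]
          ring

end CanonicalFactor

theorem exists_pos_le_norm_sub_neg_log_le {E : Type*} [NormedAddCommGroup E] {α : ℝ} (hα : 0 < α)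
    (A : Finset E) {x : E} (hx : x ∉ A) :
    ∃ δ : ℝ, 0 < δ ∧ δ ≤ 1 ∧ (∀ a ∈ A, δ ≤ ‖x - a‖) ∧
      -Real.log δ ≤ α⁻¹ * ∑ a ∈ A, ‖x - a‖ ^ (-α) := by
  classical
  induction A using Finset.induction_on with
  | empty => exact ⟨1, by simp⟩
  | insert b A hb ih =>
    simp only [Finset.mem_insert, not_or] at hx
    obtain ⟨δ, hδ₀, hδ₁, hδA, hδ⟩ := ih hx.2
    have hxb : 0 < ‖x - b‖ := norm_pos_iff.2 (sub_ne_zero.2 hx.1)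
    have hlog : -Real.log ‖x - b‖ ≤ α⁻¹ * ‖x - b‖ ^ (-α) := by
      have := Real.log_le_rpow_div (inv_nonneg.2 hxb.le) hα
      rwa [Real.log_inv, Real.inv_rpow hxb.le, ← Real.rpow_neg hxb.le, div_eq_inv_mul] at this
    have hA₀ : 0 ≤ α⁻¹ * ∑ a ∈ A, ‖x - a‖ ^ (-α) := by positivity
    have hb₀ : 0 ≤ α⁻¹ * ‖x - b‖ ^ (-α) := by positivity
    refine ⟨min δ ‖x - b‖, lt_min hδ₀ hxb, (min_le_left _ _).trans hδ₁, ?_, ?_⟩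
    · simp only [Finset.forall_mem_insert, min_le_right, true_and]
      exact fun a ha ↦ (min_le_left _ _).trans (hδA a ha)
    · rw [Finset.sum_insert hb, mul_add]
      rcases min_choice δ ‖x - b‖ with h | h <;> rw [h] <;> linarith

/-- The zeros and poles of `f` in the closed disc of radius `R` around the origin. -/
def zerosPoles (f : ℂ → ℂ) (R : ℝ) : Finset ℂ :=
  ((MeromorphicOn.divisor f (closedBall 0 R)).finiteSupport (isCompact_closedBall 0 R)).toFinset

/-- The number of zeros and poles of `f` in the closed disc of radius `R`, with multiplicity. -/
def zeroPoleCount (f : ℂ → ℂ) (R : ℝ) : ℝ :=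
  ∑ a ∈ zerosPoles f R, |(MeromorphicOn.divisor f (closedBall 0 R) a : ℝ)|

/-- The sum of `pairPotential α R a` over the zeros and poles `a` of `f` in the closed disc of
radius `R`, with multiplicity. It controls how fast the canonical factors of `f` oscillate. -/
def divisorPotential (f : ℂ → ℂ) (R α : ℝ) (z : ℂ) : ℝ :=
  ∑ a ∈ zerosPoles f R, |(MeromorphicOn.divisor f (closedBall 0 R) a : ℝ)| * pairPotential α R a z

/-- The hypotheses of the Poisson–Jensen formula on the closed disc of radius `R`: `f` is
meromorphic, takes the value prescribed by its Laurent expansion at every point, vanishes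
identically near no point, and has no zeros or poles on the boundary circle. -/
structure IsPoissonJensen (f : ℂ → ℂ) (R : ℝ) : Prop where
  meromorphicNFOn : MeromorphicNFOn f (closedBall 0 R)
  order_ne_top : ∀ z ∈ closedBall (0 : ℂ) R, meromorphicOrderAt f z ≠ ⊤
  order_eq_zero_of_mem_sphere : ∀ z ∈ sphere (0 : ℂ) R, meromorphicOrderAt f z = 0

theorem mem_zerosPoles {f : ℂ → ℂ} {R : ℝ} {a : ℂ} :
    a ∈ zerosPoles f R ↔ MeromorphicOn.divisor f (closedBall 0 R) a ≠ 0 := by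
  rw [zerosPoles, Set.Finite.mem_toFinset, Function.mem_support]

theorem one_le_abs_divisor {f : ℂ → ℂ} {R : ℝ} {a : ℂ} (ha : a ∈ zerosPoles f R) :
    1 ≤ |(MeromorphicOn.divisor f (closedBall 0 R) a : ℝ)| := by
  exact_mod_cast Int.one_le_abs (mem_zerosPoles.1 ha)

theorem divisorPotential_nonneg (f : ℂ → ℂ) (R α : ℝ) (z : ℂ) : 0 ≤ divisorPotential f R α z :=
  Finset.sum_nonneg fun _ _ ↦ mul_nonneg (abs_nonneg _) (pairPotential_nonneg _ _ _ _)

namespace IsPoissonJensen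

variable {f h : ℂ → ℂ} {R d α : ℝ} {a z w : ℂ} (hf : IsPoissonJensen f R)
include hf

theorem divisor_apply (hw : w ∈ closedBall 0 R) :
    MeromorphicOn.divisor f (closedBall 0 R) w = (meromorphicOrderAt f w).untop₀ :=
  MeromorphicOn.divisor_apply hf.meromorphicNFOn.meromorphicOn hw

theorem mem_ball (ha : a ∈ zerosPoles f R) : a ∈ ball 0 R := by
  rw [mem_zerosPoles] at ha
  have ha' : a ∈ closedBall (0 : ℂ) R :=
    (MeromorphicOn.divisor f (closedBall 0 R)).supportWithinDomain ha
  rw [hf.divisor_apply ha'] at ha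
  by_contra hball
  have hsphere : a ∈ sphere (0 : ℂ) R := by
    rw [← closedBall_sdiff_ball]
    exact ⟨ha', hball⟩
  simp [hf.order_eq_zero_of_mem_sphere a hsphere] at ha

theorem order_eq_zero (hw : w ∈ closedBall 0 R) (hwZ : w ∉ zerosPoles f R) :
    meromorphicOrderAt f w = 0 := by
  rw [mem_zerosPoles, not_not, hf.divisor_apply hw, WithTop.untop₀_eq_zero] at hwZ
  exact hwZ.resolve_right (hf.order_ne_top w hw)

theorem analyticAt (hw : w ∈ closedBall 0 R) (hwZ : w ∉ zerosPoles f R) : AnalyticAt ℂ f w :=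
  (hf.meromorphicNFOn hw).meromorphicOrderAt_nonneg_iff_analyticAt.1 (hf.order_eq_zero hw hwZ).ge

theorem ne_zero (hw : w ∈ closedBall 0 R) (hwZ : w ∉ zerosPoles f R) : f w ≠ 0 :=
  (hf.meromorphicNFOn hw).meromorphicOrderAt_eq_zero_iff.1 (hf.order_eq_zero hw hwZ)

theorem notMem_zerosPoles (hz : z ∈ sphere 0 R) : z ∉ zerosPoles f R := fun hzZ ↦
  sphere_disjoint_ball.notMem_of_mem_left hz (hf.mem_ball hzZ)

theorem circleIntegrable_log_norm (hR : 0 ≤ R) :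
    CircleIntegrable (fun ζ ↦ Real.log ‖f ζ‖) 0 R :=
  MeromorphicOn.circleIntegrable_log_norm fun _ hz ↦
    (hf.meromorphicNFOn
      (sphere_subset_closedBall ((abs_of_nonneg hR).subst hz))).meromorphicAt

theorem finsum_divisor_ball_mul (φ : ℂ → ℝ) :
    ∑ᶠ a, (MeromorphicOn.divisor f (ball 0 R) a : ℝ) * φ a =
      ∑ a ∈ zerosPoles f R, (MeromorphicOn.divisor f (closedBall 0 R) a : ℝ) * φ a := by
  have hdivisor : ∀ a ∈ ball (0 : ℂ) R,
      MeromorphicOn.divisor f (ball 0 R) a = MeromorphicOn.divisor f (closedBall 0 R) a :=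
    fun a ha ↦ by
      rw [hf.divisor_apply (ball_subset_closedBall ha), MeromorphicOn.divisor_apply
        (hf.meromorphicNFOn.meromorphicOn.mono_set ball_subset_closedBall) ha]
  rw [finsum_eq_sum_of_support_subset]
  · exact Finset.sum_congr rfl fun a ha ↦ by rw [hdivisor a (hf.mem_ball ha)]
  · intro a ha
    have ha' : MeromorphicOn.divisor f (ball 0 R) a ≠ 0 :=
      Int.cast_ne_zero.1 (left_ne_zero_of_mul ha)
    have ha_ball : a ∈ ball (0 : ℂ) R :=
      (MeromorphicOn.divisor f (ball 0 R)).supportWithinDomain ha'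
    rw [hdivisor a ha_ball] at ha'
    exact mem_zerosPoles.2 ha'

theorem log_norm_eq_of_canonicalDecomp (hdecomp : Complex.ECanonicalDecomp f h R) (hR : 0 < R)
    (hw : w ∈ closedBall 0 R) (hwZ : w ∉ zerosPoles f R) :
    Real.log ‖h w‖ = ∑ a ∈ zerosPoles f R,
      (MeromorphicOn.divisor f (closedBall 0 R) a : ℝ) * Real.log ‖canonicalFactor R a w‖ +
        Real.log ‖f w‖ := by
  have hsphere : ∀ a, MeromorphicOn.divisor f (sphere 0 R) a = 0 := fun a ↦ by
    by_cases ha : a ∈ sphere (0 : ℂ) R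
    · rw [MeromorphicOn.divisor_apply
        (hf.meromorphicNFOn.meromorphicOn.mono_set sphere_subset_closedBall) ha,
        hf.order_eq_zero_of_mem_sphere a ha, WithTop.untop₀_zero]
    · exact Function.locallyFinsuppWithin.apply_eq_zero_of_notMem _ ha
  rw [hdecomp.log_norm_eq hw (hf.order_eq_zero hw hwZ) hR, hf.finsum_divisor_ball_mul,
    (hf.analyticAt hw hwZ).meromorphicTrailingCoeffAt_of_ne_zero (hf.ne_zero hw hwZ)]
  simp only [hsphere, Int.cast_zero, zero_mul, finsum_zero, sub_zero]

theorem log_norm_eq (hw : w ∈ ball 0 R) (hwZ : w ∉ zerosPoles f R) :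
    Real.log ‖f w‖ = poissonIntegral (fun ζ ↦ Real.log ‖f ζ‖) R w - ∑ a ∈ zerosPoles f R,
      (MeromorphicOn.divisor f (closedBall 0 R) a : ℝ) * Real.log ‖canonicalFactor R a w‖ := by
  have hR : 0 < R := pos_of_mem_ball hw
  obtain ⟨h, hdecomp⟩ := hf.meromorphicNFOn.meromorphicOn.exists_ecanonicalDecomp
    fun u ↦ hf.order_ne_top u u.2
  have hpoisson : poissonIntegral (fun ζ ↦ Real.log ‖h ζ‖) R w = Real.log ‖h w‖ :=
    InnerProductSpace.HarmonicOnNhd.circleAverage_poissonKernel_smul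
      (fun x hx ↦ (hdecomp.analyticOnNhd x hx).harmonicAt_log_norm (hdecomp.ne_zero x hx)) hw
  have hboundary : poissonIntegral (fun ζ ↦ Real.log ‖h ζ‖) R w =
      poissonIntegral (fun ζ ↦ Real.log ‖f ζ‖) R w := by
    refine Real.circleAverage_congr_sphere fun ζ hζ ↦ ?_
    rw [abs_of_pos hR] at hζ
    have hfactors : ∑ a ∈ zerosPoles f R, (MeromorphicOn.divisor f (closedBall 0 R) a : ℝ) *
        Real.log ‖canonicalFactor R a ζ‖ = 0 := Finset.sum_eq_zero fun a ha ↦ by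
      rw [Complex.norm_canonicalFactor_eval_circle_eq_one (hf.mem_ball ha) hζ, Real.log_one,
        mul_zero]
    simp only [hf.log_norm_eq_of_canonicalDecomp hdecomp hR (sphere_subset_closedBall hζ)
      (hf.notMem_zerosPoles hζ), hfactors, zero_add]
  linarith [hf.log_norm_eq_of_canonicalDecomp hdecomp hR (ball_subset_closedBall hw) hwZ]

theorem log_norm_sub_log_norm_le (hz : z ∈ ball 0 R) (hw : w ∈ ball 0 R) (hzZ : z ∉ zerosPoles f R)
    (hwZ : w ∉ zerosPoles f R) (hwz : ‖w - z‖ ≤ d) (hd : 2 * d ≤ R - ‖z‖) (hα₀ : 0 < α)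
    (hα₁ : α ≤ 1) :
    Real.log ‖f w‖ - Real.log ‖f z‖ ≤
      4 * d / (R - ‖z‖) * poissonIntegral (fun ζ ↦ |Real.log ‖f ζ‖|) R z +
        d ^ α / α * (divisorPotential f R α z + divisorPotential f R α w) := by
  have hpoisson := abs_poissonIntegral_sub_le
    (hf.circleIntegrable_log_norm (pos_of_mem_ball hz).le) hz hw hwz hd
  have hfactor : ∀ a ∈ zerosPoles f R,
      (MeromorphicOn.divisor f (closedBall 0 R) a : ℝ) *
          (Real.log ‖canonicalFactor R a z‖ - Real.log ‖canonicalFactor R a w‖) ≤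
        |(MeromorphicOn.divisor f (closedBall 0 R) a : ℝ)| *
          (d ^ α / α * (pairPotential α R a z + pairPotential α R a w)) := by
    intro a ha
    refine (le_abs_self _).trans ?_
    rw [abs_mul, abs_sub_comm]
    gcongr
    exact abs_log_norm_canonicalFactor_sub_le (ne_of_mem_of_not_mem ha hzZ).symm
      (ne_of_mem_of_not_mem ha hwZ).symm (mem_ball_zero_iff.1 hz) (mem_ball_zero_iff.1 hw)
      (mem_ball_zero_iff.1 (hf.mem_ball ha)) hwz hα₀ hα₁
  have hsum := Finset.sum_le_sum hfactor
  simp only [mul_sub, Finset.sum_sub_distrib] at hsum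
  have hpotential : ∑ a ∈ zerosPoles f R, |(MeromorphicOn.divisor f (closedBall 0 R) a : ℝ)| *
        (d ^ α / α * (pairPotential α R a z + pairPotential α R a w)) =
      d ^ α / α * (divisorPotential f R α z + divisorPotential f R α w) := by
    rw [divisorPotential, divisorPotential, ← Finset.sum_add_distrib, Finset.mul_sum]
    exact Finset.sum_congr rfl fun a _ ↦ by ring
  rw [hf.log_norm_eq hz hzZ, hf.log_norm_eq hw hwZ]
  linarith [le_abs_self (poissonIntegral (fun ζ ↦ Real.log ‖f ζ‖) R w -
    poissonIntegral (fun ζ ↦ Real.log ‖f ζ‖) R z)]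

end IsPoissonJensen

theorem posLog_norm_iteratedDeriv_div_le_of_forall_mem_sphere {f : ℂ → ℂ} {x b : ℂ} {ρ M : ℝ}
    (k : ℕ) (hρ₀ : 0 < ρ) (hρ₁ : ρ ≤ 1) (hM : 0 ≤ M) (hf : DiffContOnCl ℂ f (ball x ρ))
    (hfb : ∀ w ∈ sphere x ρ, ‖f w‖ ≤ Real.exp M * ‖b‖) :
    Real.posLog ‖iteratedDeriv k f x / b‖ ≤ Real.log k.factorial + M - k * Real.log ρ := by
  have hfactorial : (1 : ℝ) ≤ k.factorial := by exact_mod_cast Nat.one_le_of_lt k.factorial_pos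
  have hquotient : ‖iteratedDeriv k f x / b‖ ≤ k.factorial * Real.exp M / ρ ^ k := by
    have hcauchy := Complex.norm_iteratedDeriv_le_of_forall_mem_sphere_norm_le k hρ₀ hf hfb
    rw [norm_div]
    refine div_le_of_le_mul₀ (norm_nonneg b) (by positivity) (hcauchy.trans_eq ?_)
    ring
  have hbound : 1 ≤ k.factorial * Real.exp M / ρ ^ k := by
    rw [one_le_div (by positivity)]
    exact (pow_le_one₀ hρ₀.le hρ₁).trans (one_le_mul_of_one_le_of_one_le hfactorial
      (Real.one_le_exp hM))
  calc Real.posLog ‖iteratedDeriv k f x / b‖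
      ≤ Real.posLog (k.factorial * Real.exp M / ρ ^ k) :=
        Real.posLog_le_posLog (norm_nonneg _) hquotient
    _ = Real.log k.factorial + M - k * Real.log ρ := by
        rw [Real.posLog_eq_log (hbound.trans (le_abs_self _)),
          Real.log_div (by positivity) (by positivity),
          Real.log_mul (by positivity) (by positivity), Real.log_exp, Real.log_pow]

theorem sum_norm_sub_rpow_neg_le_divisorPotential (f : ℂ → ℂ) (R α : ℝ) (x : ℂ) :
    ∑ a ∈ zerosPoles f R, ‖x - a‖ ^ (-α) ≤ divisorPotential f R α x :=
  Finset.sum_le_sum fun a ha ↦ (norm_sub_rpow_neg_le_pairPotential α R a x).trans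
    (le_mul_of_one_le_left (pairPotential_nonneg α R a x) (one_le_abs_divisor ha))

namespace IsPoissonJensen

variable {f : ℂ → ℂ} {R d α δ : ℝ} {z w x : ℂ} (hf : IsPoissonJensen f R)
include hf

theorem divisorPotential_le_two_mul (hα₀ : 0 ≤ α) (hα₁ : α ≤ 1)
    (hδ : ∀ a ∈ zerosPoles f R, δ ≤ ‖x - a‖) (hδR : δ ≤ R - ‖x‖) (hwx : ‖w - x‖ ≤ δ / 2) :
    divisorPotential f R α w ≤ 2 * divisorPotential f R α x := by
  rw [divisorPotential, divisorPotential, Finset.mul_sum]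
  refine Finset.sum_le_sum fun a ha ↦ ?_
  have := pairPotential_le_two_mul hα₀ hα₁ (mem_ball_zero_iff.1 (hf.mem_ball ha))
    (hwx.trans (by linarith [hδ a ha])) (hwx.trans (by linarith))
  calc |(MeromorphicOn.divisor f (closedBall 0 R) a : ℝ)| * pairPotential α R a w
      ≤ |(MeromorphicOn.divisor f (closedBall 0 R) a : ℝ)| * (2 * pairPotential α R a x) := by
        gcongr
    _ = 2 * (|(MeromorphicOn.divisor f (closedBall 0 R) a : ℝ)| * pairPotential α R a x) := by ring

theorem norm_le_exp_mul_norm (hz : z ∈ ball 0 R) (hw : w ∈ ball 0 R) (hzZ : z ∉ zerosPoles f R)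
    (hwZ : w ∉ zerosPoles f R) (hwz : ‖w - z‖ ≤ d) (hd : 2 * d ≤ R - ‖z‖) (hα₀ : 0 < α)
    (hα₁ : α ≤ 1) :
    ‖f w‖ ≤ Real.exp (4 * d / (R - ‖z‖) * poissonIntegral (fun ζ ↦ |Real.log ‖f ζ‖|) R z +
        d ^ α / α * (divisorPotential f R α z + divisorPotential f R α w)) * ‖f z‖ := by
  have hfz := norm_pos_iff.2 (hf.ne_zero (ball_subset_closedBall hz) hzZ)
  have hfw := norm_pos_iff.2 (hf.ne_zero (ball_subset_closedBall hw) hwZ)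
  rw [← div_le_iff₀ hfz, ← Real.log_le_iff_le_exp (by positivity), Real.log_div hfw.ne' hfz.ne']
  exact hf.log_norm_sub_log_norm_le hz hw hzZ hwZ hwz hd hα₀ hα₁

theorem posLog_norm_iteratedDeriv_div_le_sub_log (k : ℕ) (hzZ : z ∉ zerosPoles f R)
    (hxz : ‖x - z‖ + 1 ≤ d) (hd : 2 * d ≤ R - ‖z‖) (hα₀ : 0 < α) (hα₁ : α ≤ 1) (hδ₀ : 0 < δ)
    (hδ₁ : δ ≤ 1) (hδ : ∀ a ∈ zerosPoles f R, δ ≤ ‖x - a‖) :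
    Real.posLog ‖iteratedDeriv k f x / f z‖ ≤ Real.log k.factorial +
      (4 * d / (R - ‖z‖) * poissonIntegral (fun ζ ↦ |Real.log ‖f ζ‖|) R z +
        d ^ α / α * (divisorPotential f R α z + 2 * divisorPotential f R α x)) -
      k * Real.log (δ / 2) := by
  have hd₁ : 1 ≤ d := by linarith [norm_nonneg (x - z)]
  have hz : z ∈ ball 0 R := by
    rw [mem_ball_zero_iff]
    linarith
  have hxR : δ ≤ R - ‖x‖ := by linarith [norm_le_norm_add_norm_sub' x z]
  have hnear : ∀ w, ‖w - x‖ ≤ δ / 2 → w ∈ ball 0 R ∧ w ∉ zerosPoles f R ∧ ‖w - z‖ ≤ d := by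
    intro w hw
    refine ⟨?_, fun hwZ ↦ ?_, ?_⟩
    · rw [mem_ball_zero_iff]
      linarith [norm_le_norm_add_norm_sub' w x]
    · linarith [norm_sub_rev x w, hδ w hwZ]
    · linarith [norm_sub_le_norm_sub_add_norm_sub w x z]
  refine posLog_norm_iteratedDeriv_div_le_of_forall_mem_sphere k (half_pos hδ₀) (by linarith)
    (add_nonneg ?_ ?_) (DifferentiableOn.diffContOnCl fun w hw ↦ ?_) fun w hw ↦ ?_
  · exact (abs_nonneg _).trans (abs_poissonIntegral_sub_le
      (hf.circleIntegrable_log_norm (pos_of_mem_ball hz).le) hz hz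
      (by rw [sub_self, norm_zero]; linarith) hd)
  · have := divisorPotential_nonneg f R α z
    have := divisorPotential_nonneg f R α x
    positivity
  · rw [closure_ball _ (by positivity), mem_closedBall_iff_norm] at hw
    obtain ⟨hwR, hwZ, -⟩ := hnear w hw
    exact (hf.analyticAt (ball_subset_closedBall hwR) hwZ).differentiableAt.differentiableWithinAt
  · rw [mem_sphere_iff_norm] at hw
    obtain ⟨hwR, hwZ, hwz⟩ := hnear w hw.le
    have hV := hf.divisorPotential_le_two_mul hα₀.le hα₁ hδ hxR hw.le
    refine (hf.norm_le_exp_mul_norm hz hwR hzZ hwZ hwz hd hα₀ hα₁).trans ?_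
    gcongr

theorem posLog_norm_iteratedDeriv_div_le (k : ℕ) (hzZ : z ∉ zerosPoles f R)
    (hxZ : x ∉ zerosPoles f R) (hxz : ‖x - z‖ + 1 ≤ d) (hd : 2 * d ≤ R - ‖z‖) (hα₀ : 0 < α)
    (hα₁ : α ≤ 1) :
    Real.posLog ‖iteratedDeriv k f x / f z‖ ≤ Real.log k.factorial + k * Real.log 2 +
      4 * d / (R - ‖z‖) * poissonIntegral (fun ζ ↦ |Real.log ‖f ζ‖|) R z +
      (k + 2 * d ^ α) / α * (divisorPotential f R α z + divisorPotential f R α x) := by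
  obtain ⟨δ, hδ₀, hδ₁, hδZ, hδ_log⟩ := exists_pos_le_norm_sub_neg_log_le hα₀ _ hxZ
  have hbound :=
    hf.posLog_norm_iteratedDeriv_div_le_sub_log k hzZ hxz hd hα₀ hα₁ hδ₀ hδ₁ hδZ
  have hd₀ : 0 ≤ d := by linarith [norm_nonneg (x - z)]
  set V := divisorPotential f R α
  have hVz : 0 ≤ V z := divisorPotential_nonneg f R α z
  have hlog : -Real.log δ ≤ α⁻¹ * V x := hδ_log.trans
    (mul_le_mul_of_nonneg_left (sum_norm_sub_rpow_neg_le_divisorPotential f R α x) (by positivity))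
  have hlog_mul : k * -Real.log δ ≤ k * (α⁻¹ * V x) := by gcongr
  have hVz_mul : 0 ≤ (k + d ^ α) / α * V z := by positivity
  rw [Real.log_div hδ₀.ne' two_ne_zero] at hbound
  linear_combination hbound + hlog_mul + hVz_mul

end IsPoissonJensen

theorem circleAverage_mono_of_countable {F G : ℂ → ℝ} {c : ℂ} {r : ℝ} {S : Set ℂ}
    (hF : ∀ z, 0 ≤ F z) (hG : CircleIntegrable G c r) (hr : r ≠ 0) (hS : S.Countable)
    (hFG : ∀ z ∈ sphere c |r|, z ∉ S → F z ≤ G z) :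
    Real.circleAverage F c r ≤ Real.circleAverage G c r := by
  simp only [Real.circleAverage_def, smul_eq_mul,
    intervalIntegral.integral_of_le Real.two_pi_pos.le]
  refine mul_le_mul_of_nonneg_left (integral_mono_of_nonneg (.of_forall fun θ ↦ hF _)
    ((intervalIntegrable_iff_integrableOn_Ioc_of_le Real.two_pi_pos.le).1 hG) ?_) (by positivity)
  filter_upwards [(hS.preimage_circleMap c hr).ae_notMem _] with θ hθ
  exact hFG _ (circleMap_mem_sphere' c r θ) hθ

theorem circleIntegrable_comp_add_const {E : Type*} [NormedAddCommGroup E] {g : ℂ → E} {c : ℂ}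
    {r : ℝ} (hg : CircleIntegrable g c r) : CircleIntegrable (fun z ↦ g (z + c)) 0 r := by
  simpa only [CircleIntegrable, circleMap, zero_add, add_comm c] using hg

theorem circleAverage_const_mul (a : ℝ) (g : ℂ → ℝ) (c : ℂ) (r : ℝ) :
    Real.circleAverage (fun z ↦ a * g z) c r = a * Real.circleAverage g c r :=
  Real.circleAverage_fun_smul (a := a)

section Potential

variable {α r : ℝ} (hα₀ : 0 ≤ α) (hα₁ : α < 1) (hr : r ≠ 0)
include hα₀ hα₁ hr

theorem circleIntegrable_pairPotential (R : ℝ) (a b : ℂ) :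
    CircleIntegrable (pairPotential α R a) b r :=
  (circleIntegrable_norm_sub_rpow_neg hα₀ hα₁ hr b a).add
    (circleIntegrable_norm_sub_rpow_neg hα₀ hα₁ hr b _)

theorem circleAverage_pairPotential_le (R : ℝ) (a b : ℂ) :
    Real.circleAverage (pairPotential α R a) b r ≤ 2 * sinRpowMean α * |r| ^ (-α) := by
  unfold pairPotential
  rw [Real.circleAverage_fun_add (circleIntegrable_norm_sub_rpow_neg hα₀ hα₁ hr b a)
    (circleIntegrable_norm_sub_rpow_neg hα₀ hα₁ hr b _)]
  linarith [circleAverage_norm_sub_rpow_neg_le hα₀ hα₁ hr b a,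
    circleAverage_norm_sub_rpow_neg_le hα₀ hα₁ hr b (R ^ 2 / conj a)]

theorem circleIntegrable_divisorPotential (f : ℂ → ℂ) (R : ℝ) (b : ℂ) :
    CircleIntegrable (divisorPotential f R α) b r :=
  CircleIntegrable.fun_sum _ fun a _ ↦
    (circleIntegrable_pairPotential hα₀ hα₁ hr R a b).const_mul _

theorem circleAverage_divisorPotential_le (f : ℂ → ℂ) (R : ℝ) (b : ℂ) :
    Real.circleAverage (divisorPotential f R α) b r ≤
      2 * sinRpowMean α * |r| ^ (-α) * zeroPoleCount f R := by
  have hint : ∀ a ∈ zerosPoles f R, CircleIntegrable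
      (fun z ↦ |(MeromorphicOn.divisor f (closedBall 0 R) a : ℝ)| * pairPotential α R a z) b r :=
    fun a _ ↦ (circleIntegrable_pairPotential hα₀ hα₁ hr R a b).const_mul _
  calc Real.circleAverage (divisorPotential f R α) b r
      = ∑ a ∈ zerosPoles f R, |(MeromorphicOn.divisor f (closedBall 0 R) a : ℝ)| *
          Real.circleAverage (pairPotential α R a) b r := by
        unfold divisorPotential
        rw [Real.circleAverage_fun_sum hint]
        exact Finset.sum_congr rfl fun a _ ↦ circleAverage_const_mul _ _ b r
    _ ≤ ∑ a ∈ zerosPoles f R, |(MeromorphicOn.divisor f (closedBall 0 R) a : ℝ)| *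
          (2 * sinRpowMean α * |r| ^ (-α)) := by
        gcongr with a
        exact circleAverage_pairPotential_le hα₀ hα₁ hr R a b
    _ = 2 * sinRpowMean α * |r| ^ (-α) * zeroPoleCount f R := by
        rw [← Finset.sum_mul, zeroPoleCount, mul_comm]

theorem circleIntegrable_divisorPotential_add_comp (f : ℂ → ℂ) (R : ℝ) (c : ℂ) :
    CircleIntegrable (fun z ↦ divisorPotential f R α z + divisorPotential f R α (z + c)) 0 r :=
  (circleIntegrable_divisorPotential hα₀ hα₁ hr f R 0).add
    (circleIntegrable_comp_add_const (circleIntegrable_divisorPotential hα₀ hα₁ hr f R c))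

theorem circleAverage_divisorPotential_add_comp_le (f : ℂ → ℂ) (R : ℝ) (c : ℂ) :
    Real.circleAverage (fun z ↦ divisorPotential f R α z + divisorPotential f R α (z + c)) 0 r ≤
      4 * sinRpowMean α * |r| ^ (-α) * zeroPoleCount f R := by
  rw [Real.circleAverage_fun_add (circleIntegrable_divisorPotential hα₀ hα₁ hr f R 0)
    (circleIntegrable_comp_add_const (circleIntegrable_divisorPotential hα₀ hα₁ hr f R c)),
    Real.circleAverage_map_add_const]
  linarith [circleAverage_divisorPotential_le hα₀ hα₁ hr f R 0,
    circleAverage_divisorPotential_le hα₀ hα₁ hr f R c]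

end Potential

theorem IsPoissonJensen.circleAverage_posLog_norm_iteratedDeriv_div_le {f : ℂ → ℂ} {R r d α : ℝ}
    {c : ℂ} (hf : IsPoissonJensen f R) (k : ℕ) (hr : 0 < r) (hc : ‖c‖ + 1 ≤ d)
    (hd : 2 * d ≤ R - r) (hα₀ : 0 < α) (hα₁ : α < 1) :
    Real.circleAverage (fun z ↦ Real.posLog ‖iteratedDeriv k f (z + c) / f z‖) 0 r ≤
      Real.log k.factorial + k * Real.log 2 +
      4 * d / (R - r) * Real.circleAverage (fun ζ ↦ |Real.log ‖f ζ‖|) 0 R +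
      4 * (k + 2 * d ^ α) / α * sinRpowMean α * r ^ (-α) * zeroPoleCount f R := by
  have hd₀ : 0 < d := by linarith [norm_nonneg c]
  have hrR : |r| < R := by
    rw [abs_of_pos hr]
    linarith
  have hlog : CircleIntegrable (fun ζ ↦ |Real.log ‖f ζ‖|) 0 R :=
    (hf.circleIntegrable_log_norm (by linarith)).abs
  set P := poissonIntegral (fun ζ ↦ |Real.log ‖f ζ‖|) R
  set C := Real.log k.factorial + k * Real.log 2
  let W : ℂ → ℝ := fun z ↦ divisorPotential f R α z + divisorPotential f R α (z + c)
  have hC_int : CircleIntegrable (fun _ ↦ C) 0 r := circleIntegrable_const _ _ _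
  have hP_int : CircleIntegrable (fun z ↦ 4 * d / (R - r) * P z) 0 r :=
    (circleIntegrable_poissonIntegral hlog hrR).const_mul _
  have hW_int : CircleIntegrable (fun z ↦ (k + 2 * d ^ α) / α * W z) 0 r :=
    (circleIntegrable_divisorPotential_add_comp hα₀.le hα₁ hr.ne' f R c).const_mul _
  have hW_avg : Real.circleAverage W 0 r ≤ 4 * sinRpowMean α * r ^ (-α) * zeroPoleCount f R := by
    simpa only [abs_of_pos hr] using
      circleAverage_divisorPotential_add_comp_le hα₀.le hα₁ hr.ne' f R c
  calc Real.circleAverage (fun z ↦ Real.posLog ‖iteratedDeriv k f (z + c) / f z‖) 0 r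
      ≤ Real.circleAverage
          (fun z ↦ C + 4 * d / (R - r) * P z + (k + 2 * d ^ α) / α * W z) 0 r := by
        refine circleAverage_mono_of_countable (fun z ↦ Real.posLog_nonneg)
          ((hC_int.add hP_int).add hW_int) hr.ne' ((zerosPoles f R).countable_toSet.union
            ((zerosPoles f R).countable_toSet.preimage (add_left_injective c))) fun z hz hzS ↦ ?_
        simp only [Set.mem_union, not_or, Set.mem_preimage, Finset.mem_coe] at hzS
        rw [abs_of_pos hr, mem_sphere_zero_iff_norm] at hz
        rw [← hz] at hd ⊢
        exact hf.posLog_norm_iteratedDeriv_div_le k hzS.1 hzS.2 (by rwa [add_sub_cancel_left]) hd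
          hα₀ hα₁.le
    _ = C + 4 * d / (R - r) * Real.circleAverage (fun ζ ↦ |Real.log ‖f ζ‖|) 0 R +
          (k + 2 * d ^ α) / α * Real.circleAverage W 0 r := by
        rw [Real.circleAverage_fun_add (hC_int.fun_add hP_int) hW_int,
          Real.circleAverage_fun_add hC_int hP_int, Real.circleAverage_const,
          circleAverage_const_mul, circleAverage_const_mul, circleAverage_poissonIntegral hlog hrR]
    _ ≤ C + 4 * d / (R - r) * Real.circleAverage (fun ζ ↦ |Real.log ‖f ζ‖|) 0 R +
          (k + 2 * d ^ α) / α * (4 * sinRpowMean α * r ^ (-α) * zeroPoleCount f R) := by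
        gcongr
    _ = _ := by ring

section ValueDistribution

open ValueDistribution

variable {f : ℂ → ℂ} {r R : ℝ}

theorem circleAverage_abs_log_norm (hf : Meromorphic f) (R : ℝ) :
    Real.circleAverage (fun z ↦ |Real.log ‖f z‖|) 0 R = proximity f ⊤ R + proximity f⁻¹ ⊤ R := by
  rw [proximity_top, proximity_top, ← Real.circleAverage_add
    hf.meromorphicOn.circleIntegrable_posLog_norm hf.inv.meromorphicOn.circleIntegrable_posLog_norm]
  congr 1
  ext z
  simp only [Pi.add_apply, Pi.inv_apply, norm_inv, ← Real.half_mul_log_add_log_abs, Real.log_inv,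
    abs_neg]
  ring

theorem characteristic_inv_top_le (hf : Meromorphic f) (hR : R ≠ 0) :
    characteristic f⁻¹ ⊤ R ≤
      characteristic f ⊤ R + |Real.log ‖meromorphicTrailingCoeffAt f 0‖| := by
  linarith [characteristic_sub_characteristic_inv_of_ne_zero hf hR,
    neg_abs_le (Real.log ‖meromorphicTrailingCoeffAt f 0‖)]

theorem circleAverage_abs_log_norm_le (hf : Meromorphic f) (hR : 1 ≤ R) :
    Real.circleAverage (fun z ↦ |Real.log ‖f z‖|) 0 R ≤
      2 * characteristic f ⊤ R + |Real.log ‖meromorphicTrailingCoeffAt f 0‖| := by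
  have hinv := characteristic_inv_top_le hf (zero_lt_one.trans_le hR).ne'
  simp only [characteristic, Pi.add_apply] at hinv ⊢
  linarith [circleAverage_abs_log_norm hf R, logCounting_nonneg (f := f) (e := ⊤) hR,
    logCounting_nonneg (f := f⁻¹) (e := ⊤) hR]

theorem logCounting_top_add_logCounting_zero_le (hf : Meromorphic f) (hR : R ≠ 0) :
    logCounting f ⊤ R + logCounting f 0 R ≤
      2 * characteristic f ⊤ R + |Real.log ‖meromorphicTrailingCoeffAt f 0‖| := by
  have hinv := characteristic_inv_top_le hf hR
  have hprox : 0 ≤ proximity f ⊤ R := proximity_nonneg R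
  have hprox_inv : 0 ≤ proximity f⁻¹ ⊤ R := proximity_nonneg R
  simp only [characteristic, Pi.add_apply, logCounting_inv] at hinv ⊢
  linarith

theorem sum_mul_log_div_le_logCounting {D : Function.locallyFinsupp ℂ ℤ} (hD : 0 ≤ D)
    {A : Finset ℂ} (hA : ∀ a ∈ A, ‖a‖ ≤ r) (hr : 1 ≤ r) (hrR : r ≤ R) :
    (∑ a ∈ A, (D a : ℝ)) * Real.log (R / r) ≤ Function.locallyFinsuppWithin.logCounting D R := by
  classical
  have hR : 1 ≤ R := hr.trans hrR
  have hle : ∑ a ∈ A, D a • Function.locallyFinsuppWithin.single a (1 : ℤ) ≤ D := fun z ↦ by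
    simp only [Function.locallyFinsuppWithin.coe_sum, Function.locallyFinsuppWithin.coe_zsmul,
      Finset.sum_apply, Pi.smul_apply, smul_eq_mul, Function.locallyFinsuppWithin.single_apply,
      mul_ite, mul_one, mul_zero, Finset.sum_ite_eq]
    split_ifs
    · exact le_rfl
    · exact hD z
  have hcounting := Function.locallyFinsuppWithin.logCounting_le hle hR
  rw [map_sum] at hcounting
  simp only [map_zsmul, Finset.sum_apply, Pi.smul_apply] at hcounting
  refine le_trans ?_ hcounting
  rw [Finset.sum_mul]
  refine Finset.sum_le_sum fun a ha ↦ ?_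
  rw [Function.locallyFinsuppWithin.logCounting_single_eq_log_sub_const
    ((hA a ha).trans hrR), zsmul_eq_mul,
    Int.cast_one, one_mul, Real.log_div (by positivity) (by positivity)]
  have hlog : Real.log ‖a‖ ≤ Real.log r := by
    rcases eq_or_ne a 0 with rfl | ha₀
    · simpa using Real.log_nonneg hr
    · exact Real.log_le_log (norm_pos_iff.2 ha₀) (hA a ha)
  have hDa : (0 : ℝ) ≤ D a := Int.cast_nonneg (hD a)
  gcongr

theorem zeroPoleCount_mul_log_div_le_logCounting (hf : Meromorphic f) (hr : 1 ≤ r) (hrR : r ≤ R) :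
    zeroPoleCount f r * Real.log (R / r) ≤ logCounting f ⊤ R + logCounting f 0 R := by
  have hmem : ∀ a ∈ zerosPoles f r, a ∈ closedBall (0 : ℂ) r := fun a ha ↦
    (MeromorphicOn.divisor f (closedBall 0 r)).supportWithinDomain (mem_zerosPoles.1 ha)
  have hnorm : ∀ a ∈ zerosPoles f r, ‖a‖ ≤ r := fun a ha ↦ mem_closedBall_zero_iff.1 (hmem a ha)
  have hcount : zeroPoleCount f r =
      ∑ a ∈ zerosPoles f r, ((MeromorphicOn.divisor f Set.univ)⁻ a : ℝ) +
        ∑ a ∈ zerosPoles f r, ((MeromorphicOn.divisor f Set.univ)⁺ a : ℝ) := by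
    rw [zeroPoleCount, ← Finset.sum_add_distrib]
    refine Finset.sum_congr rfl fun a ha ↦ ?_
    rw [MeromorphicOn.divisor_apply hf.meromorphicOn (hmem a ha),
      Function.locallyFinsuppWithin.negPart_apply, Function.locallyFinsuppWithin.posPart_apply,
      MeromorphicOn.divisor_apply hf.meromorphicOn (Set.mem_univ a), ← Int.cast_abs,
      ← Int.cast_add, add_comm, posPart_add_negPart]
  rw [hcount, add_mul, logCounting_top, logCounting_zero]
  exact add_le_add (sum_mul_log_div_le_logCounting (negPart_nonneg _) hnorm hr hrR)
    (sum_mul_log_div_le_logCounting (posPart_nonneg _) hnorm hr hrR)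

theorem zeroPoleCount_mul_log_div_le (hf : Meromorphic f) (hr : 1 ≤ r) (hrR : r ≤ R) :
    zeroPoleCount f r * Real.log (R / r) ≤
      2 * characteristic f ⊤ R + |Real.log ‖meromorphicTrailingCoeffAt f 0‖| :=
  (zeroPoleCount_mul_log_div_le_logCounting hf hr hrR).trans
    (logCounting_top_add_logCounting_zero_le hf (by linarith))

theorem zeroPoleCount_le (hf : Meromorphic f) (hr : 1 ≤ r) (hrR : r < R) :
    zeroPoleCount f r ≤
      (2 * characteristic f ⊤ R + |Real.log ‖meromorphicTrailingCoeffAt f 0‖|) /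
        ((R - r) / R) := by
  have hR : 0 < R := by linarith
  have hlog : (R - r) / R ≤ Real.log (R / r) := by
    rw [sub_div, div_self hR.ne', ← inv_div R r]
    exact Real.one_sub_inv_le_log_of_pos (div_pos hR (by linarith))
  rw [le_div_iff₀ (div_pos (sub_pos.2 hrR) hR)]
  exact (mul_le_mul_of_nonneg_left hlog (Finset.sum_nonneg fun _ _ ↦ abs_nonneg _)).trans
    (zeroPoleCount_mul_log_div_le hf hr hrR.le)

theorem one_le_zeroPoleCount {a : ℂ} (ha : a ∈ zerosPoles f R) : 1 ≤ zeroPoleCount f R :=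
  (one_le_abs_divisor ha).trans (Finset.single_le_sum (f := fun a ↦
    |(MeromorphicOn.divisor f (closedBall 0 R) a : ℝ)|) (fun _ _ ↦ abs_nonneg _) ha)

theorem tendsto_characteristic_top_atTop (hf : Meromorphic f) {z₀ : ℂ} (hz₀ : AnalyticAt ℂ f z₀)
    (hne : meromorphicOrderAt (fun z ↦ f z - f z₀) z₀ ≠ ⊤) :
    Tendsto (characteristic f ⊤) atTop atTop := by
  set g : ℂ → ℂ := fun z ↦ f z - f z₀
  set C := |Real.log ‖meromorphicTrailingCoeffAt g 0‖|
  set ρ := ‖z₀‖ + 1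
  have hρ : 1 ≤ ρ := le_add_of_nonneg_left (norm_nonneg z₀)
  have hg : Meromorphic g := fun z ↦ (hf z).sub (.const _ _)
  have hz₀_mem : z₀ ∈ zerosPoles g ρ := by
    have hg_order : meromorphicOrderAt g z₀ ≠ 0 := fun h ↦
      (hz₀.sub analyticAt_const).meromorphicNFAt.meromorphicOrderAt_eq_zero_iff.1 h
        (sub_self (f z₀))
    rw [mem_zerosPoles, MeromorphicOn.divisor_apply hg.meromorphicOn (by simp [ρ]), Ne,
      WithTop.untop₀_eq_zero]
    exact not_or.2 ⟨hg_order, hne⟩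
  have hlower : ∀ᶠ R in atTop, Real.log (R / ρ) ≤
      2 * (characteristic f ⊤ R + (Real.posLog ‖f z₀‖ + Real.log 2)) + C := by
    filter_upwards [eventually_ge_atTop ρ] with R hR
    have hlog : 0 ≤ Real.log (R / ρ) := Real.log_nonneg ((one_le_div (by positivity)).2 hR)
    have hshift : -(Real.posLog ‖f z₀‖ + Real.log 2) ≤
        characteristic f ⊤ R - characteristic g ⊤ R :=
      (abs_le.1 (abs_characteristic_sub_characteristic_shift_le hf)).1
    linarith [zeroPoleCount_mul_log_div_le hg hρ hR,
      le_mul_of_one_le_left hlog (one_le_zeroPoleCount hz₀_mem)]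
  have hlog_top : Tendsto (fun R : ℝ ↦ Real.log (R / ρ)) atTop atTop :=
    Real.tendsto_log_atTop.comp (tendsto_id.atTop_div_const (by positivity))
  refine tendsto_atTop.2 fun b ↦ ?_
  filter_upwards [hlower,
    hlog_top.eventually_ge_atTop (2 * (b + (Real.posLog ‖f z₀‖ + Real.log 2)) + C)] with R h₁ h₂
  linarith

theorem exists_isPoissonJensen (hf : MeromorphicNFOn f Set.univ)
    (hord : ∀ z, meromorphicOrderAt f z ≠ ⊤) {a b : ℝ} (hab : a < b) :
    ∃ R ∈ Set.Ioo a b, IsPoissonJensen f R := by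
  obtain ⟨R, hR, hRZ⟩ :=
    (Set.Ioo_infinite hab).exists_notMem_finset ((zerosPoles f b).image norm)
  refine ⟨R, hR, fun z _ ↦ hf (Set.mem_univ z), fun z _ ↦ hord z, fun z hz ↦ ?_⟩
  rw [mem_sphere_zero_iff_norm] at hz
  have hzZ : z ∉ zerosPoles f b := fun h ↦ hRZ (Finset.mem_image.2 ⟨z, h, hz⟩)
  rw [mem_zerosPoles, not_not, MeromorphicOn.divisor_apply
    (fun w _ ↦ (hf (Set.mem_univ w)).meromorphicAt)
    (mem_closedBall_zero_iff.2 (hz.trans_le hR.2.le)), WithTop.untop₀_eq_zero] at hzZ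
  exact hzZ.resolve_right (hord z)

end ValueDistribution

section LogarithmicDerivative

open ValueDistribution

variable {f : ℂ → ℂ} (hf : MeromorphicNFOn f Set.univ) (hord : ∀ z, meromorphicOrderAt f z ≠ ⊤)
include hf hord

theorem circleAverage_posLog_norm_iteratedDeriv_div_le_characteristic (k : ℕ) {c : ℂ}
    {d r s α : ℝ} (hc : ‖c‖ + 1 ≤ d) (hr : 1 ≤ r) (hds : 6 * d ≤ s) (hsr : s ≤ r) (hα₀ : 0 < α)
    (hα₁ : α < 1) :
    Real.circleAverage (fun z ↦ Real.posLog ‖iteratedDeriv k f (z + c) / f z‖) 0 r ≤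
      Real.log k.factorial + k * Real.log 2 +
      (12 * d / s + 24 * (k + 2 * d ^ α) / α * sinRpowMean α * (r ^ (1 - α) / s)) *
        (2 * characteristic f ⊤ (r + s) + |Real.log ‖meromorphicTrailingCoeffAt f 0‖|) := by
  have hfm : Meromorphic f := fun z ↦ (hf (Set.mem_univ z)).meromorphicAt
  have hd : 0 < d := by linarith [norm_nonneg c]
  have hs : 0 < s := by linarith
  have hr₀ : 0 < r := by linarith
  obtain ⟨R, ⟨hrR, hRr⟩, hfR⟩ :=
    exists_isPoissonJensen hf hord (show r + s / 3 < r + 2 * s / 3 by linarith)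
  have hR : 0 < R := by linarith
  set M := 2 * characteristic f ⊤ (r + s) + |Real.log ‖meromorphicTrailingCoeffAt f 0‖|
  have hmean : Real.circleAverage (fun ζ ↦ |Real.log ‖f ζ‖|) 0 R ≤ M := by
    have hmono : characteristic f ⊤ R ≤ characteristic f ⊤ (r + s) :=
      characteristic_monotoneOn hfm hR (add_pos hr₀ hs) (by linarith)
    linarith [circleAverage_abs_log_norm_le hfm (show 1 ≤ R by linarith)]
  have hcoeff : 4 * d / (R - r) ≤ 12 * d / s := by
    rw [div_le_div_iff₀ (by linarith) hs]
    nlinarith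
  have hcount : zeroPoleCount f R ≤ 6 * (r / s) * M := by
    have hM : 0 ≤ M := (Real.circleAverage_nonneg_of_nonneg fun _ _ ↦ abs_nonneg _).trans hmean
    have hratio : s / (6 * r) ≤ (r + s - R) / (r + s) := by
      rw [div_le_div_iff₀ (by positivity) (by positivity)]
      nlinarith
    calc zeroPoleCount f R
        ≤ M / ((r + s - R) / (r + s)) := zeroPoleCount_le hfm (by linarith) (by linarith)
      _ ≤ M / (s / (6 * r)) := div_le_div_of_nonneg_left hM (by positivity) hratio
      _ = 6 * (r / s) * M := by
        field_simp
  have hmean_sin := sinRpowMean_nonneg α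
  refine (hfR.circleAverage_posLog_norm_iteratedDeriv_div_le k hr₀ hc (by linarith) hα₀
    hα₁).trans ?_
  rw [add_mul, ← add_assoc]
  refine add_le_add (add_le_add_right (mul_le_mul hcoeff hmean
    (Real.circleAverage_nonneg_of_nonneg fun _ _ ↦ abs_nonneg _) (by positivity)) _) ?_
  calc 4 * (k + 2 * d ^ α) / α * sinRpowMean α * r ^ (-α) * zeroPoleCount f R
      ≤ 4 * (k + 2 * d ^ α) / α * sinRpowMean α * r ^ (-α) * (6 * (r / s) * M) := by gcongr
    _ = 24 * (k + 2 * d ^ α) / α * sinRpowMean α * (r ^ (1 - α) / s) * M := by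
        rw [show (1 - α) = -α + 1 by ring, Real.rpow_add_one hr₀.ne']
        ring

theorem exists_circleAverage_posLog_div_characteristic_le (c : ℂ) (k : ℕ) {δ : ℝ} (hδ₀ : 0 < δ)
    (hδ₁ : δ ≤ 1) :
    ∃ A B₁ B₂ C : ℝ, ∀ r, 1 ≤ r → 6 * (‖c‖ + 1) ≤ r ^ δ → 0 < characteristic f ⊤ r →
      characteristic f ⊤ (r + r ^ δ) ≤ Real.exp 1 * characteristic f ⊤ r →
      Real.circleAverage (fun z ↦ Real.posLog ‖iteratedDeriv k f (z + c) / f z‖) 0 r /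
          characteristic f ⊤ r ≤
        A / characteristic f ⊤ r +
          (B₁ * r ^ (-δ) + B₂ * r ^ (-(δ / 2))) *
            (2 * Real.exp 1 + C / characteristic f ⊤ r) := by
  set d := ‖c‖ + 1
  -- Any exponent in `(1 - δ, 1)` makes `r ^ (1 - α) / r ^ δ` decay.
  set α := 1 - δ / 2 with hα
  set C := |Real.log ‖meromorphicTrailingCoeffAt f 0‖|
  set B := 24 * (k + 2 * d ^ α) / α * sinRpowMean α
  have hα₀ : 0 < α := by linarith
  have hB : 0 ≤ B := mul_nonneg (by positivity) (sinRpowMean_nonneg α)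
  refine ⟨Real.log k.factorial + k * Real.log 2, 12 * d, B, C, fun r hr hds hTr hTs ↦ ?_⟩
  have hr₀ : 0 < r := by linarith
  have hsr : r ^ δ ≤ r := by
    simpa only [Real.rpow_one] using Real.rpow_le_rpow_of_exponent_le hr hδ₁
  have hrpow : r ^ (1 - α) / r ^ δ = r ^ (-(δ / 2)) := by
    rw [← Real.rpow_sub hr₀]
    congr 1
    linarith
  rw [div_le_iff₀ hTr]
  calc _ ≤ Real.log k.factorial + k * Real.log 2 +
          (12 * d / r ^ δ + B * (r ^ (1 - α) / r ^ δ)) *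
            (2 * characteristic f ⊤ (r + r ^ δ) + C) :=
        circleAverage_posLog_norm_iteratedDeriv_div_le_characteristic hf hord k le_rfl hr hds hsr
          hα₀ (by linarith)
    _ ≤ Real.log k.factorial + k * Real.log 2 +
          (12 * d / r ^ δ + B * (r ^ (1 - α) / r ^ δ)) *
            (2 * (Real.exp 1 * characteristic f ⊤ r) + C) := by
        gcongr
    _ = _ := by
        rw [hrpow, Real.rpow_neg hr₀.le δ]
        field_simp

theorem exists_hasFiniteLogMeasure_tendsto_circleAverage_posLog_div (c : ℂ) (k : ℕ) {σ : ℝ}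
    (hσ₀ : 0 ≤ σ) (hσ₁ : σ < 1) (hT : Tendsto (characteristic f ⊤) atTop atTop)
    (hgrowth : ∀ᶠ r in atTop, Real.log (characteristic f ⊤ r) ≤ r ^ σ) :
    ∃ E, HasFiniteLogMeasure E ∧ Tendsto (fun r ↦
      Real.circleAverage (fun z ↦ Real.posLog ‖iteratedDeriv k f (z + c) / f z‖) 0 r /
        characteristic f ⊤ r) (atTop ⊓ 𝓟 Eᶜ) (𝓝 0) := by
  set δ := (1 - σ) / 2 with hδ
  have hδ₀ : 0 < δ := by linarith
  obtain ⟨E, hE, hshift⟩ := exists_hasFiniteLogMeasure_le_exp_one_mul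
    (characteristic_monotoneOn fun z ↦ (hf (Set.mem_univ z)).meromorphicAt) hT hσ₀ hδ₀.le
    (by linarith) hgrowth
  obtain ⟨A, B₁, B₂, C, hbound⟩ := exists_circleAverage_posLog_div_characteristic_le hf hord c k
    hδ₀ (by linarith)
  refine ⟨E, hE, ?_⟩
  have hlim : Tendsto (fun r ↦ A / characteristic f ⊤ r + (B₁ * r ^ (-δ) + B₂ * r ^ (-(δ / 2))) *
      (2 * Real.exp 1 + C / characteristic f ⊤ r)) atTop (𝓝 0) := by
    have hrpow := ((tendsto_rpow_neg_atTop hδ₀).const_mul B₁).add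
      ((tendsto_rpow_neg_atTop (half_pos hδ₀)).const_mul B₂)
    simpa only [mul_zero, add_zero, zero_mul] using (hT.const_div_atTop A).add
      (hrpow.mul ((hT.const_div_atTop C).const_add (2 * Real.exp 1)))
  refine squeeze_zero' ?_ ?_ (hlim.mono_left inf_le_left)
  · filter_upwards [(hT.eventually_ge_atTop 0).filter_mono inf_le_left] with r hTr
    exact div_nonneg (Real.circleAverage_nonneg_of_nonneg fun _ _ ↦ Real.posLog_nonneg) hTr
  · have hlarge : ∀ᶠ r : ℝ in atTop,
        1 ≤ r ∧ 6 * (‖c‖ + 1) ≤ r ^ δ ∧ 0 < characteristic f ⊤ r :=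
      (eventually_ge_atTop 1).and
        (((tendsto_rpow_atTop hδ₀).eventually_ge_atTop _).and (hT.eventually_gt_atTop _))
    filter_upwards [hshift, hlarge.filter_mono inf_le_left] with r hTs ⟨hr, hds, hTr⟩
    exact hbound r hr hds hTr hTs

end LogarithmicDerivative

theorem prox_eq_circleAverage (f : ℂ → ℂ) (r : ℝ) :
    prox f r = Real.circleAverage (fun z ↦ Real.posLog ‖f z‖) 0 r := by
  simp only [prox, Real.circleAverage, smul_eq_mul, circleMap, zero_add, logp, Real.posLog,
    max_comm]

theorem analyticAt_pow_mul_iff {f : ℂ → ℂ} {z : ℂ} (hf : MeromorphicAt f z) (n : ℕ) :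
    AnalyticAt ℂ (fun w ↦ (w - z) ^ (n + 1) * f w) z ↔
      ((meromorphicOrderAt f z).untop₀)⁻ ≤ n := by
  set g : ℂ → ℂ := fun w ↦ (w - z) ^ (n + 1) * f w
  have hgz : g z = 0 := by simp [g]
  have horder : meromorphicOrderAt g z = (n + 1 : ℕ) + meromorphicOrderAt f z :=
    (fun_meromorphicOrderAt_mul (by fun_prop) hf).trans
      (congrArg (· + _) fun_meromorphicOrderAt_pow_id_sub_const)
  have hpos : AnalyticAt ℂ g z ↔ 0 < meromorphicOrderAt g z :=
    ⟨fun h ↦ h.meromorphicOrderAt_nonneg.lt_of_ne fun h₀ ↦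
      h.meromorphicNFAt.meromorphicOrderAt_eq_zero_iff.1 h₀.symm hgz,
      fun h ↦ .of_meromorphicOrderAt_pos h hgz⟩
  rw [hpos, horder]
  cases meromorphicOrderAt f z with
  | top => simp
  | coe m =>
    rw [WithTop.untop₀_coe, negPart_def, sup_le_iff]
    norm_cast
    omega

theorem poleOrd_eq_negPart_order {f : ℂ → ℂ} {z : ℂ} (hf : MeromorphicAt f z) :
    (poleOrd f z : ℤ) = ((meromorphicOrderAt f z).untop₀)⁻ := by
  obtain ⟨m, hm⟩ := Int.eq_ofNat_of_zero_le (negPart_nonneg (meromorphicOrderAt f z).untop₀)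
  simp only [poleOrd, analyticAt_pow_mul_iff hf, hm, Nat.cast_le]
  exact congrArg _ csInf_Ici

section LogCounting

variable {ρ r : ℝ}

theorem intervalIntegrable_indicator_Ici_inv (hρ : 0 < ρ) (hρr : ρ ≤ r) :
    IntervalIntegrable ((Set.Ici ρ).indicator fun t ↦ t⁻¹) volume 0 r := by
  have hinv : IntervalIntegrable (fun t : ℝ ↦ t⁻¹) volume ρ r :=
    intervalIntegral.intervalIntegrable_inv
      (fun x hx ↦ (hρ.trans_le (Set.uIcc_of_le hρr ▸ hx).1).ne') continuousOn_id
  rw [intervalIntegrable_iff_integrableOn_Icc_of_le hρr] at hinv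
  rw [intervalIntegrable_iff_integrableOn_Ioc_of_le (hρ.le.trans hρr), IntegrableOn,
    integrable_indicator_iff measurableSet_Ici, IntegrableOn,
    Measure.restrict_restrict measurableSet_Ici]
  exact hinv.mono_set fun t ht ↦ ⟨ht.1, ht.2.2⟩

theorem integral_indicator_Ici_inv (hρ : 0 < ρ) (hρr : ρ ≤ r) :
    ∫ t in (0 : ℝ)..r, (Set.Ici ρ).indicator (fun t ↦ t⁻¹) t = Real.log (r * ρ⁻¹) := by
  have hr : 0 < r := hρ.trans_le hρr
  have hset : Set.Ici ρ ∩ Set.Ioc 0 r = Set.Icc ρ r := by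
    ext t
    exact ⟨fun ht ↦ ⟨ht.1, ht.2.2⟩, fun ht ↦ ⟨ht.1, hρ.trans_le ht.1, ht.2⟩⟩
  rw [intervalIntegral.integral_of_le hr.le, integral_indicator measurableSet_Ici,
    Measure.restrict_restrict measurableSet_Ici, hset, integral_Icc_eq_integral_Ioc,
    ← intervalIntegral.integral_of_le hρr, integral_inv_of_pos hρ hr, div_eq_mul_inv]

/-- The points of the support of the divisor `D` in the closed disc of radius `|r|`. -/
def discSupport (D : Function.locallyFinsupp ℂ ℤ) (r : ℝ) : Finset ℂ :=
  ((Function.locallyFinsuppWithin.toClosedBall r D).finiteSupport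
    (isCompact_closedBall 0 |r|)).toFinset

variable (D : Function.locallyFinsupp ℂ ℤ)

variable {D} in
theorem mem_discSupport {a : ℂ} : a ∈ discSupport D r ↔ ‖a‖ ≤ |r| ∧ D a ≠ 0 := by
  rw [discSupport, Set.Finite.mem_toFinset, Function.mem_support]
  by_cases ha : a ∈ closedBall (0 : ℂ) |r|
  · rw [Function.locallyFinsuppWithin.toClosedBall_eval_within D ha,
      and_iff_right (mem_closedBall_zero_iff.1 ha)]
  · rw [Function.locallyFinsuppWithin.apply_eq_zero_of_notMem _ ha, mem_closedBall_zero_iff] at *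
    simp [ha]

theorem finsum_closedBall_eq_sum {t : ℝ} (ht : t ≤ |r|) :
    ∑ᶠ z ∈ closedBall (0 : ℂ) t, (D z : ℝ) =
      ∑ a ∈ discSupport D r with ‖a‖ ≤ t, (D a : ℝ) := by
  refine finsum_mem_eq_sum_of_inter_support_eq _ (Set.ext fun a ↦ ?_)
  simp only [Set.mem_inter_iff, mem_closedBall_zero_iff, Function.mem_support, ne_eq,
    Int.cast_eq_zero, SetLike.mem_coe, Finset.mem_filter, mem_discSupport]
  grind

theorem finsum_closedBall_sub_div_eq_sum {t : ℝ} (ht₀ : 0 ≤ t) (htr : t ≤ |r|) :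
    (∑ᶠ z ∈ closedBall (0 : ℂ) t, (D z : ℝ) - D 0) / t =
      ∑ a ∈ (discSupport D r).erase 0, D a * (Set.Ici ‖a‖).indicator (fun t ↦ t⁻¹) t := by
  have hzero : 0 ∉ discSupport D r → (D 0 : ℝ) = 0 := by simp [mem_discSupport]
  have hsplit : ∑ a ∈ discSupport D r, (if ‖a‖ ≤ t then (D a : ℝ) else 0) =
      ∑ a ∈ (discSupport D r).erase 0, (if ‖a‖ ≤ t then (D a : ℝ) else 0) + D 0 := by
    by_cases h : 0 ∈ discSupport D r
    · simp [← Finset.sum_erase_add _ _ h, ht₀]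
    · rw [Finset.erase_eq_of_notMem h, hzero h, add_zero]
  rw [finsum_closedBall_eq_sum D htr, Finset.sum_filter, hsplit, add_sub_cancel_right,
    Finset.sum_div]
  refine Finset.sum_congr rfl fun a _ ↦ ?_
  by_cases hat : ‖a‖ ≤ t <;> simp [hat, div_eq_mul_inv]

theorem logCounting_eq_sum (r : ℝ) :
    Function.locallyFinsuppWithin.logCounting D r =
      ∑ a ∈ (discSupport D r).erase 0, D a * Real.log (r * ‖a‖⁻¹) + D 0 * Real.log r := by
  simp only [Function.locallyFinsuppWithin.logCounting, AddMonoidHom.coe_mk, ZeroHom.coe_mk]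
  congr 1
  rw [finsum_eq_sum_of_support_subset (s := (discSupport D r).erase 0)]
  · refine Finset.sum_congr rfl fun a ha ↦ ?_
    rw [Function.locallyFinsuppWithin.toClosedBall_eval_within]
    exact mem_closedBall_zero_iff.2 (mem_discSupport.1 (Finset.mem_of_mem_erase ha)).1
  · intro z hz
    rw [Function.mem_support] at hz
    rw [Finset.mem_coe, Finset.mem_erase, discSupport, Set.Finite.mem_toFinset,
      Function.mem_support]
    exact ⟨fun h ↦ hz (by simp [h]), fun h ↦ hz (by simp [h])⟩

theorem logCounting_eq_integral (hr : 0 < r) :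
    Function.locallyFinsuppWithin.logCounting D r =
      (∫ t in (0 : ℝ)..r, (∑ᶠ z ∈ closedBall (0 : ℂ) t, (D z : ℝ) - D 0) / t) +
        D 0 * Real.log r := by
  have hnorm : ∀ a ∈ (discSupport D r).erase 0, 0 < ‖a‖ ∧ ‖a‖ ≤ r := fun a ha ↦ by
    rw [Finset.mem_erase, mem_discSupport, abs_of_pos hr] at ha
    exact ⟨norm_pos_iff.2 ha.1, ha.2.1⟩
  rw [logCounting_eq_sum, intervalIntegral.integral_congr_Ioo_of_le hr.le
    fun t ht ↦ finsum_closedBall_sub_div_eq_sum D ht.1.le (ht.2.le.trans (le_abs_self r)),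
    intervalIntegral.integral_finsetSum fun a ha ↦
      (intervalIntegrable_indicator_Ici_inv (hnorm a ha).1 (hnorm a ha).2).const_mul _]
  congr 1
  refine Finset.sum_congr rfl fun a ha ↦ ?_
  rw [intervalIntegral.integral_const_mul,
    integral_indicator_Ici_inv (hnorm a ha).1 (hnorm a ha).2]

end LogCounting

theorem N_eq_logCounting {f : ℂ → ℂ} (hf : Meromorphic f) {r : ℝ} (hr : 0 < r) :
    N f r = ValueDistribution.logCounting f ⊤ r := by
  have hpoleOrd : ∀ z, (poleOrd f z : ℝ) = ((MeromorphicOn.divisor f Set.univ)⁻ z : ℝ) :=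
    fun z ↦ by
      rw [Function.locallyFinsuppWithin.negPart_apply,
        MeromorphicOn.divisor_apply hf.meromorphicOn (Set.mem_univ z),
        ← poleOrd_eq_negPart_order (hf z), Int.cast_natCast]
  rw [ValueDistribution.logCounting_top, logCounting_eq_integral _ hr]
  simp only [N, poleCount, hpoleOrd, closedBall_zero, finsum_mem_singleton]

theorem T_eq_characteristic {f : ℂ → ℂ} (hf : Meromorphic f) {r : ℝ} (hr : 0 < r) :
    T f r = ValueDistribution.characteristic f ⊤ r := by
  rw [T, prox_eq_circleAverage, N_eq_logCounting hf hr, ValueDistribution.characteristic,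
    Pi.add_apply, ValueDistribution.proximity_top]

section Codiscrete

variable {f g : ℂ → ℂ}

theorem eventually_codiscrete_add_const {P : ℂ → Prop} (hP : ∀ᶠ z in codiscrete ℂ, P z) (c : ℂ) :
    ∀ᶠ z in codiscrete ℂ, P (z + c) := by
  simp only [Filter.Eventually, mem_codiscrete, disjoint_principal_right, compl_compl] at hP ⊢
  exact fun x ↦ mem_map.1
    ((Homeomorph.addRight c).map_punctured_nhds_eq x ▸ hP (Homeomorph.addRight c x))

theorem iteratedDeriv_eventuallyEq_codiscrete (hfg : f =ᶠ[codiscrete ℂ] g) (k : ℕ) :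
    iteratedDeriv k f =ᶠ[codiscrete ℂ] iteratedDeriv k g := by
  filter_upwards [hfg] with z hz
  have hfg_nhds : f =ᶠ[𝓝 z] g := (mem_codiscrete'.1 hfg).1.mem_nhds hz
  exact hfg_nhds.iteratedDeriv_eq k

theorem prox_iteratedDeriv_div_congr (hfg : f =ᶠ[codiscrete ℂ] g) (k : ℕ) (c : ℂ) {r : ℝ}
    (hr : r ≠ 0) :
    prox (fun z ↦ iteratedDeriv k f (z + c) / f z) r =
      prox (fun z ↦ iteratedDeriv k g (z + c) / g z) r := by
  simp only [prox_eq_circleAverage, ← ValueDistribution.proximity_top]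
  refine ValueDistribution.proximity_congr_codiscrete ?_ hr
  filter_upwards [hfg,
    eventually_codiscrete_add_const (iteratedDeriv_eventuallyEq_codiscrete hfg k) c] with z hz hzc
  rw [hz, hzc]

theorem prox_iteratedDeriv_div_eq_zero {a : ℂ} (hfa : f =ᶠ[codiscrete ℂ] fun _ ↦ a) (k : ℕ)
    (c : ℂ) {r : ℝ} (hr : r ≠ 0) :
    prox (fun z ↦ iteratedDeriv k f (z + c) / f z) r = 0 := by
  have hle_one : Real.posLog ‖(if k = 0 then a else 0) / a‖ = 0 := by
    rw [Real.posLog_eq_zero_iff, abs_norm]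
    split_ifs
    · rw [norm_div]
      exact div_self_le_one _
    · simp
  simp only [prox_iteratedDeriv_div_congr hfa k c hr, prox_eq_circleAverage, iteratedDeriv_const,
    hle_one, Real.circleAverage_const]

theorem meromorphicOrderAt_sub_const_ne_top (hf : Meromorphic f)
    (hconst : ∀ a, ¬ f =ᶠ[codiscrete ℂ] fun _ ↦ a) (a z : ℂ) :
    meromorphicOrderAt (fun w ↦ f w - a) z ≠ ⊤ := by
  refine (Meromorphic.exists_meromorphicOrderAt_ne_top_iff_forall (hf.sub (.const a))).1 ?_ z
  contrapose! hconst
  refine ⟨a, mem_codiscrete.2 fun x ↦ ?_⟩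
  rw [disjoint_principal_right, compl_compl]
  filter_upwards [meromorphicOrderAt_eq_top_iff.1 (hconst x)] with z hz
  exact sub_eq_zero.1 hz

end Codiscrete

theorem HyperOrderLtOne.exists_log_le_rpow {f : ℂ → ℂ} (hρ : HyperOrderLtOne f) :
    ∃ σ : ℝ, 0 ≤ σ ∧ σ < 1 ∧ ∀ᶠ r in atTop, Real.log (T f r) ≤ r ^ σ := by
  obtain ⟨b, hρb, hb⟩ := EReal.lt_iff_exists_real_btwn.1 hρ
  refine ⟨max b 0, le_max_right _ _, max_lt (by exact_mod_cast hb) one_pos, ?_⟩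
  filter_upwards [eventually_lt_of_limsup_lt hρb, eventually_gt_atTop 1] with r hr hr₁
  have hr₀ : 0 < r := one_pos.trans hr₁
  have hlogr : 0 < Real.log r := Real.log_pos hr₁
  rcases le_or_gt (Real.log (T f r)) 0 with hlog | hlog
  · exact hlog.trans (by positivity)
  · rw [← Real.log_le_log_iff hlog (by positivity), Real.log_rpow hr₀]
    refine ((div_lt_iff₀ hlogr).1 (EReal.coe_lt_coe_iff.1 hr)).le.trans ?_
    gcongr
    exact le_max_left b 0

section SmallQtyLog

variable {f : ℂ → ℂ}

theorem smallQtyLog_prox_iteratedDeriv_div_of_const {a : ℂ} (hfa : f =ᶠ[codiscrete ℂ] fun _ ↦ a)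
    (c : ℂ) (k : ℕ) :
    SmallQtyLog (fun r ↦ prox (fun z ↦ iteratedDeriv k f (z + c) / f z) r) f := by
  refine ⟨∅, Set.empty_subset _, by simp, Tendsto.mono_left ?_ inf_le_left⟩
  refine tendsto_const_nhds.congr' ?_
  filter_upwards [eventually_ne_atTop 0] with r hr
  rw [prox_iteratedDeriv_div_eq_zero hfa k c hr, zero_div]

theorem smallQtyLog_prox_iteratedDeriv_div_of_not_const (hf : Meromorphic f)
    (hconst : ∀ a, ¬ f =ᶠ[codiscrete ℂ] fun _ ↦ a) (hρ : HyperOrderLtOne f) (c : ℂ) (k : ℕ) :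
    SmallQtyLog (fun r ↦ prox (fun z ↦ iteratedDeriv k f (z + c) / f z) r) f := by
  set g := toMeromorphicNFOn f Set.univ
  have hg : MeromorphicNFOn g Set.univ := meromorphicNFOn_toMeromorphicNFOn f Set.univ
  have hgm : Meromorphic g := fun z ↦ (hg (Set.mem_univ z)).meromorphicAt
  have hfg : f =ᶠ[codiscrete ℂ] g := toMeromorphicNFOn_eqOn_codiscrete hf.meromorphicOn
  have hord : ∀ a z, meromorphicOrderAt (fun w ↦ g w - a) z ≠ ⊤ :=
    meromorphicOrderAt_sub_const_ne_top hgm fun a hga ↦ hconst a (hfg.trans hga)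
  have hord_zero : ∀ z, meromorphicOrderAt g z ≠ ⊤ := by simpa using hord 0
  obtain ⟨R, hR, hPJ⟩ := exists_isPoissonJensen hg hord_zero zero_lt_one
  have hR_mem : (R : ℂ) ∈ sphere 0 R := by simp [abs_of_pos hR.1]
  have hT : Tendsto (ValueDistribution.characteristic g ⊤) atTop atTop :=
    tendsto_characteristic_top_atTop hgm
      (hPJ.analyticAt (sphere_subset_closedBall hR_mem) (hPJ.notMem_zerosPoles hR_mem)) (hord _ _)
  have hT_eq : ∀ {r}, 0 < r → T f r = ValueDistribution.characteristic g ⊤ r := fun {r} hr ↦ by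
    rw [T_eq_characteristic hf hr, ValueDistribution.characteristic_congr_codiscrete hfg hr.ne']
  obtain ⟨σ, hσ₀, hσ₁, hgrowth⟩ := hρ.exists_log_le_rpow
  obtain ⟨E, ⟨hE₁, hE⟩, hlim⟩ := exists_hasFiniteLogMeasure_tendsto_circleAverage_posLog_div hg
    hord_zero c k hσ₀ hσ₁ hT <| by
      filter_upwards [hgrowth, eventually_gt_atTop 0] with r hr hr₀
      rwa [← hT_eq hr₀]
  refine ⟨E, hE₁, hE, hlim.congr' ?_⟩
  filter_upwards [(eventually_gt_atTop 0).filter_mono inf_le_left] with r hr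
  rw [hT_eq hr, prox_iteratedDeriv_div_congr hfg k c hr.ne', prox_eq_circleAverage]

end SmallQtyLog

end Nevanlinna

theorem statement5_general (f : ℂ → ℂ) (hf : ∀ z, MeromorphicAt f z) (hρ : HyperOrderLtOne f)
    (c : ℂ) (k : ℕ) :
    SmallQtyLog (fun r => prox (fun z => iteratedDeriv k f (z + c) / f z) r) f := by
  by_cases hconst : ∃ a, f =ᶠ[codiscrete ℂ] fun _ ↦ a
  · obtain ⟨a, hfa⟩ := hconst
    exact smallQtyLog_prox_iteratedDeriv_div_of_const hfa c k
  · exact smallQtyLog_prox_iteratedDeriv_div_of_not_const hf (not_exists.1 hconst) hρ c k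

/-- **Key estimate.**  For a non-constant meromorphic function `f` with
`ρ₁(f) < 1` and `c ≠ 0`, one has `m(r, f^{(k)}(z+c)/f(z)) = S(r,f)` outside a
possible exceptional set of finite logarithmic measure. -/
theorem statement5
    (f : ℂ → ℂ) (hf : ∀ z, MeromorphicAt f z) (hfnc : Nonconst f)
    (hρ : HyperOrderLtOne f)
    (c : ℂ) (hc : c ≠ 0)
    (k : ℕ) (hk : 1 ≤ k) :
    SmallQtyLog (fun r => prox (fun z => iteratedDeriv k f (z + c) / f z) r) f :=
  statement5_general f hf hρ c k
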